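/- Let X be a compact topological space equipped with a Borel probability measure μ, let L ⊆ C(X) be a measure-separating linear subspace of dimension n+1, let μ₁, …, μₙ be Borel probability measures on X that are absolutely continuous with respect to μ, and let q be a prime power. Then there exist q pairwise distinct functions u₁, …, u_q ∈ L such that, setting Vⱼ = {x ∈ X : uⱼ(x) ≥ u_l(x) for all l = 1, …, q}, one has μᵢ(Vⱼ) = 1/q for every i = 1, …, n and every j = 1, …, q. -/

import Mathlib

open MeasureTheory

/-!
Let `v 0, …, v n` be a basis of `L`. A real matrix `x` with `n` rows and `q` columns, giving the
coefficients along `v 0, …, v (n - 1)`, is completed by a last coefficient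
`tieBreak x j = ∑_{k < j} φ(‖x_j - x_k‖)` of `v n`, where `x_j` is the `j`-th column and
`φ(t) = max 0 (1 - t)`. The resulting functions `U x j ∈ L` depend continuously on `x` and are
pairwise distinct for every `x`, because two equal columns receive different last coefficients.
Since `L` is measure-separating, the measures `F x i j = μ_i(V_j)` are continuous in `x` and
satisfy `∑ j, F x i j = 1`. It remains to find `x` such that `F x i j` does not depend on `j`.
The only symmetry available is equivariance under those permutations of the columns that preserve
the order of every pair of columns at distance less than `1` (`tieBreak_perm`).

Such an `x` is produced by a Sperner-type argument. On a fine lattice give the `i`-th row of a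
matrix `a` the label `0` if its sum is negative, and otherwise the label `j + 1`, where `j`
maximizes `F a i j`. A small cell in which, for every `i`, all labels occur yields in the limit an
`x` with `F x i k ≤ F x i j` for all `i, j, k` (`exists_equal_scores`).

To find such cells they are counted with signs. For one row, the determinant of the 0/1 matrix of
the labels of `q + 1` vertices is a cocycle which vanishes unless all the labels occur; the cup
product over the rows is a cocycle of degree `n * q`, and `degree R l` is its value on the Kuhn
triangulation of the cube `[-R, R]^(n * q)`. Interpolating between two labellings across a prism
over the cube and applying Stokes' formula (`stokes`) expresses the difference of their degrees as
a sum over lateral boundary cells (`degree_sub`). On a boundary cell with nonzero contribution some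
row has an entry `R` or `-R` while its sum is close to `0`, so its entries are spread out and have
a large gap, which splits the columns into two nonempty clusters. Shuffling the two clusters
preserves the contribution: orientation and labels both produce the factor `(sign σ) ^ n`.
Therefore the contributions with a lower cluster of size `c` come in `q.choose c` equal groups, and
`q.choose c` is divisible by `p` when `q` is a power of `p` and `0 < c < q` (`dvd_degree_sub`).
Hence modulo `p` all labellings with this equivariance have the same degree. One of them takes the
maximal entry of the row; for labels of this kind the boundary terms vanish altogether
(`degree_eq_of_maxRule`), so its degree equals that of the labelling `refLabel`, for which exactly
one cell contributes (`natAbs_degree_refLabel`), and is `1` or `-1`. So no such degree is `0`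
(`exists_rainbow`).
-/

namespace VoronoiEquipartition
open Finset

/-! ### Ordered cochains and the Sperner cocycle -/

/-- The increasing map `ℕ → ℕ` omitting the value `k`. -/
def face (k j : ℕ) : ℕ := if j < k then j else j + 1

/-- `c` is a cocycle of degree `a` on ordered simplices with vertices in `Y`. A simplex is given
as a sequence `ℕ → Y`, of which only the vertices `0, …, a` matter. -/
structure IsCocycle {Y : Type*} (a : ℕ) (c : (ℕ → Y) → ℤ) : Prop where
  congr : ∀ y y' : ℕ → Y, (∀ j ≤ a, y j = y' j) → c y = c y'
  closed : ∀ y : ℕ → Y, ∑ k ∈ range (a + 2), (-1) ^ k * c (y ∘ face k) = 0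

/-- The cup product of two cocycles is a cocycle. -/
lemma IsCocycle.cup {Y : Type*} {a b : ℕ} {c d : (ℕ → Y) → ℤ} (hc : IsCocycle a c)
    (hd : IsCocycle b d) : IsCocycle (a + b) (fun y => c y * d (fun j => y (a + j))) := by
  constructor
  · intro y y' h
    rw [hc.congr y y' fun j hj => h j (by omega), hd.congr (fun j => y (a + j))
      (fun j => y' (a + j)) fun j hj => h _ (by omega)]
  · intro y
    have hc' := hc.closed y
    rw [sum_range_succ] at hc'
    have hd' := hd.closed (fun j => y (a + j))
    rw [sum_range_succ'] at hd'
    have e1 : c (y ∘ face (a + 1)) = c y :=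
      hc.congr _ _ fun j hj => by simp [face, show j < a + 1 by omega]
    rw [show a + b + 2 = (a + 1) + (b + 1) by ring, sum_range_add]
    have s1 : ∑ k ∈ range (a + 1), (-1) ^ k * (c (y ∘ face k) *
        d (fun j => (y ∘ face k) (a + j))) =
        (∑ k ∈ range (a + 1), (-1) ^ k * c (y ∘ face k)) * d (fun j => y (a + 1 + j)) := by
      rw [sum_mul]
      refine sum_congr rfl fun k hk => ?_
      have : k ≤ a := by simpa [Nat.lt_succ_iff] using hk
      have : (fun j => (y ∘ face k) (a + j)) = fun j => y (a + 1 + j) := by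
        funext j
        simp only [Function.comp, face]
        rw [if_neg (by omega)]; congr 1; omega
      rw [this]; ring
    have s2 : ∑ k ∈ range (b + 1), (-1) ^ (a + 1 + k) * (c (y ∘ face (a + 1 + k)) *
        d (fun j => (y ∘ face (a + 1 + k)) (a + j))) =
        (-1) ^ a * c y * ∑ k ∈ range (b + 1), (-1) ^ (k + 1) *
          d ((fun j => y (a + j)) ∘ face (k + 1)) := by
      rw [mul_sum]
      refine sum_congr rfl fun k hk => ?_
      have h1 : c (y ∘ face (a + 1 + k)) = c y :=
        hc.congr _ _ fun j hj => by simp [face, show j < a + 1 + k by omega]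
      have h2 : (fun j => (y ∘ face (a + 1 + k)) (a + j)) =
          (fun j => y (a + j)) ∘ face (k + 1) := by
        funext j
        simp only [Function.comp, face]
        congr 1
        split_ifs <;> omega
      rw [h1, h2]; ring
    have e2 : (fun j => y (a + j)) ∘ face 0 = fun j => y (a + 1 + j) := by
      funext j; simp only [Function.comp, face]; congr 1; simp; omega
    rw [s1, s2]
    rw [e1] at hc'
    rw [e2] at hd'
    rw [eq_neg_of_add_eq_zero_left hc', eq_neg_of_add_eq_zero_left hd']
    ring

/-- The sign of the labels of `q + 1` vertices as a permutation of `Fin (q + 1)`, and `0` if they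
are not distinct. -/
def spernerSign (q : ℕ) (y : ℕ → Fin (q + 1)) : ℤ :=
  Matrix.det (Matrix.of fun k l : Fin (q + 1) => if y k = l then (1 : ℤ) else 0)

/-- The matrix of the labels of `q + 2` vertices, extended by a column of ones, is singular because
its rows of labels sum to one; expanding its determinant along that column gives the cocycle
identity. -/
lemma isCocycle_spernerSign (q : ℕ) : IsCocycle q (spernerSign q) := by
  constructor
  · intro y y' h
    unfold spernerSign
    congr 1
    ext k l
    simp [h k (by omega)]
  · intro y
    let A : Matrix (Fin (q + 2)) (Fin (q + 2)) ℤ :=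
      Matrix.of fun k l => Fin.cases 1 (fun l => if y k = l then (1 : ℤ) else 0) l
    have hA : A.det = 0 := by
      rw [← Matrix.exists_mulVec_eq_zero_iff]
      refine ⟨Fin.cases 1 (fun _ => -1), fun h => ?_, ?_⟩
      · simpa using congrFun h 0
      · ext k
        simp [Matrix.mulVec, dotProduct, Fin.sum_univ_succ, A]
    rw [Matrix.det_succ_column_zero] at hA
    rw [Finset.sum_range, ← hA]
    refine sum_congr rfl fun k _ => ?_
    have : spernerSign q (y ∘ face k) = (A.submatrix k.succAbove Fin.succ).det := by
      unfold spernerSign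
      congr 1
      ext r l
      have : ((k.succAbove r : Fin (q + 2)) : ℕ) = face k r := by
        unfold Fin.succAbove face
        simp only [Fin.lt_def, Fin.val_castSucc]
        split_ifs <;> simp
      simp [A, this]
    rw [this]
    simp [A]

lemma spernerSign_surj {q : ℕ} {y : ℕ → Fin (q + 1)} (h : spernerSign q y ≠ 0)
    (l : Fin (q + 1)) : ∃ k ≤ q, y k = l := by
  have hinj : Function.Injective fun k : Fin (q + 1) => y k := by
    intro k k' hk
    by_contra hne
    refine h (Matrix.det_zero_of_row_eq hne ?_)
    funext l
    simp only [Matrix.of_apply]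
    simp only at hk
    rw [hk]
  obtain ⟨k, hk⟩ := (Finite.injective_iff_surjective.1 hinj) l
  exact ⟨k, by omega, hk⟩

lemma spernerSign_natAbs {q : ℕ} {y : ℕ → Fin (q + 1)}
    (h : ∀ k ≤ q, ∀ k' ≤ q, y k = y k' → k = k') : (spernerSign q y).natAbs = 1 := by
  have hinj : Function.Injective fun k : Fin (q + 1) => y k := by
    intro k k' hk
    exact Fin.ext (h k (by omega) k' (by omega) hk)
  let π : Equiv.Perm (Fin (q + 1)) := Equiv.ofBijective _ (Finite.injective_iff_bijective.1 hinj)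
  have : spernerSign q y = (Equiv.Perm.sign π : ℤ) := by
    have hdet := Matrix.det_permutation (R := ℤ) π
    rw [Int.cast_id] at hdet
    rw [← hdet, spernerSign]
    congr 1
    ext k l
    simp [π, Equiv.toPEquiv_apply, PEquiv.toMatrix_apply, eq_comm]
  rw [this]
  exact Int.units_natAbs _

/-- A permutation of `Fin q` acting on the nonzero labels and fixing the label `0`. -/
def extPerm {q : ℕ} (σ : Equiv.Perm (Fin q)) : Equiv.Perm (Fin (q + 1)) :=
  Equiv.Perm.decomposeFin.symm (0, σ)

lemma extPerm_zero {q : ℕ} (σ : Equiv.Perm (Fin q)) : extPerm σ 0 = 0 := by simp [extPerm]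
lemma extPerm_succ {q : ℕ} (σ : Equiv.Perm (Fin q)) (j : Fin q) :
    extPerm σ j.succ = (σ j).succ := by simp [extPerm]

lemma spernerSign_perm {q : ℕ} (σ : Equiv.Perm (Fin q)) (y : ℕ → Fin (q + 1)) :
    spernerSign q (fun k => extPerm σ (y k)) = (Equiv.Perm.sign σ : ℤ) * spernerSign q y := by
  have hs : Equiv.Perm.sign (extPerm σ) = Equiv.Perm.sign σ := by
    simp [extPerm, Equiv.Perm.decomposeFin.symm_sign]
  have hdet := Matrix.det_permute' (extPerm σ)⁻¹
    (Matrix.of fun k l : Fin (q + 1) => if y k = l then (1 : ℤ) else 0)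
  rw [Int.cast_id, Equiv.Perm.sign_inv, hs] at hdet
  rw [spernerSign, spernerSign, ← hdet]
  congr 1
  ext k l
  simp [Matrix.submatrix, Equiv.eq_symm_apply]

/-- The cup product of the Sperner cocycles of the first `r` rows, `y k i` being the label in row
`i` of the vertex `k`. -/
def prodCochain (q r : ℕ) (y : ℕ → ℕ → Fin (q + 1)) : ℤ :=
  ∏ i ∈ range r, spernerSign q fun k => y (i * q + k) i

lemma isCocycle_prodCochain (q r : ℕ) : IsCocycle (r * q) (prodCochain q r) := by
  induction r with
  | zero =>
    constructor
    · intros; simp [prodCochain]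
    · intro y; simp [prodCochain, sum_range_succ]
  | succ r ih =>
    have h2 : IsCocycle q fun y : ℕ → ℕ → Fin (q + 1) => spernerSign q fun k => y k r := by
      constructor
      · intro y y' h
        exact (isCocycle_spernerSign q).congr _ _ fun j hj => by rw [h j hj]
      · intro y
        exact (isCocycle_spernerSign q).closed fun k => y k r
    have := ih.cup h2
    rw [show (r + 1) * q = r * q + q by ring]
    convert this using 2 with y
    simp [prodCochain, prod_range_succ]

lemma prodCochain_perm {q : ℕ} (r : ℕ) (σ : Equiv.Perm (Fin q)) (y y' : ℕ → ℕ → Fin (q + 1))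
    (h : ∀ k, ∀ i < r, y' k i = extPerm σ (y k i)) :
    prodCochain q r y' = (Equiv.Perm.sign σ : ℤ) ^ r * prodCochain q r y := by
  unfold prodCochain
  rw [← card_range r, ← prod_const, card_range, ← prod_mul_distrib]
  refine prod_congr rfl fun i hi => ?_
  rw [← spernerSign_perm]
  congr 1
  funext k
  exact h _ _ (mem_range.1 hi)

/-! ### Stokes' formula for the Kuhn triangulation -/

section

variable {ι : Type*} {m : ℕ}

/-- The `k`-th vertex of the Kuhn simplex with lowest vertex `z` whose edges are the unit vectors
`e 0, e 1, …` in this order. -/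
def path (z : ι → ℤ) (e : Fin (m + 1) ≃ ι) (k : ℕ) : ι → ℤ :=
  fun κ => z κ + if (e.symm κ : ℕ) < k then 1 else 0

/-- The orientation of an ordering `e` of the coordinates relative to `e₀`. -/
def ordSign (e₀ e : Fin (m + 1) ≃ ι) : ℤ := (Equiv.Perm.sign (e.trans e₀.symm) : ℤ)

lemma ordSign_trans (e₀ e : Fin (m + 1) ≃ ι) (ρ : Equiv.Perm (Fin (m + 1))) :
    ordSign e₀ (ρ.trans e) = (Equiv.Perm.sign ρ : ℤ) * ordSign e₀ e := by
  unfold ordSign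
  rw [Equiv.trans_assoc, Equiv.Perm.sign_trans, Units.val_mul, mul_comm]

lemma ordSign_perm [Fintype ι] [DecidableEq ι] (e₀ e : Fin (m + 1) ≃ ι) (σ : Equiv.Perm ι) :
    ordSign e₀ (e.trans σ) = (Equiv.Perm.sign σ : ℤ) * ordSign e₀ e := by
  unfold ordSign
  have : (e.trans σ).trans e₀.symm = (e.trans e₀.symm).trans ((e₀.trans σ).trans e₀.symm) := by
    ext; simp
  rw [this, Equiv.Perm.sign_trans, Equiv.Perm.sign_trans_trans_symm, Units.val_mul]

/-- For each base point the inner faces of the Kuhn simplices cancel in pairs, by exchanging two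
consecutive edges. What is left are the first and the last faces, and moving the first edge to the
end turns a first face into the last face of a simplex based at a neighbouring point. -/
theorem stokes [Fintype ι] [DecidableEq ι] (e₀ : Fin (m + 1) ≃ ι) {C : (ℕ → ι → ℤ) → ℤ} (hC : IsCocycle m C)
    (s : Finset (ι → ℤ)) :
    ∑ e : Fin (m + 1) ≃ ι, ordSign e₀ e * ∑ z ∈ s,
      (C (path (z + Pi.single (e (Fin.last m)) 1) e) - C (path z e)) = 0 := by
  suffices H : ∀ z, ∑ e : Fin (m + 1) ≃ ι, ordSign e₀ e *
      (C (path (z + Pi.single (e (Fin.last m)) 1) e) - C (path z e)) = 0 by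
    simp_rw [mul_sum]
    rw [sum_comm]
    exact sum_eq_zero fun z _ => H z
  intro z
  have h0 : ∑ e : Fin (m + 1) ≃ ι, ordSign e₀ e * ∑ k ∈ range (m + 2),
      (-1) ^ k * C (path z e ∘ face k) = 0 :=
    sum_eq_zero fun e _ => by rw [hC.closed, mul_zero]
  simp_rw [sum_range_succ' _ (m + 1), sum_range_succ _ m, mul_add, sum_add_distrib, mul_sum] at h0
  rw [sum_comm, sum_eq_zero, zero_add] at h0
  · have hlast : ∀ e : Fin (m + 1) ≃ ι, C (path z e ∘ face (m + 1)) = C (path z e) := fun e =>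
      hC.congr _ _ fun j hj => by simp [face, show j < m + 1 by omega]
    -- moving the first edge to the end identifies the first faces with shifted last faces
    have hrot : ∑ e : Fin (m + 1) ≃ ι, ordSign e₀ e * ((-1) ^ 0 * C (path z e ∘ face 0)) =
        (-1) ^ m * ∑ e : Fin (m + 1) ≃ ι, ordSign e₀ e *
          C (path (z + Pi.single (e (Fin.last m)) 1) e) := by
      rw [mul_sum]
      refine Fintype.sum_equiv (Equiv.equivCongr (finRotate (m + 1)).symm (Equiv.refl ι)) _ _ ?_
      intro e
      have he : (Equiv.equivCongr (finRotate (m + 1)).symm (Equiv.refl ι)) e =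
          (finRotate (m + 1)).trans e := by ext; simp
      rw [he, ordSign_trans, sign_finRotate]
      have hp : C (path z e ∘ face 0) = C (path (z + Pi.single
          (((finRotate (m + 1)).trans e) (Fin.last m)) 1) ((finRotate (m + 1)).trans e)) := by
        refine hC.congr _ _ fun j hj => ?_
        funext κ
        obtain ⟨r, rfl⟩ := ((finRotate (m + 1)).trans e).surjective κ
        simp only [path, face, Function.comp, Pi.add_apply, Pi.single_apply,
          Equiv.symm_apply_apply, EmbeddingLike.apply_eq_iff_eq]
        simp only [Equiv.trans_apply, Equiv.symm_apply_apply]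
        rcases eq_or_ne r (Fin.last m) with rfl | hr
        · simp; omega
        · have : (r : ℕ) ≠ m := fun h => hr (Fin.ext h)
          rw [coe_finRotate_of_ne_last hr]
          simp [hr]
      rw [hp]
      push_cast
      have : ((-1 : ℤ) ^ m) * (-1) ^ m = 1 := by rw [← mul_pow]; simp
      linear_combination (-(ordSign e₀ e * C (path (z + Pi.single
          (((finRotate (m + 1)).trans e) (Fin.last m)) 1) ((finRotate (m + 1)).trans e)))) * this
    rw [hrot] at h0
    simp_rw [hlast] at h0
    simp_rw [mul_sub, sum_sub_distrib]
    have h1 : ∑ e : Fin (m + 1) ≃ ι, ordSign e₀ e * ((-1) ^ (m + 1) * C (path z e)) =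
        - ((-1) ^ m * ∑ e : Fin (m + 1) ≃ ι, ordSign e₀ e * C (path z e)) := by
      rw [mul_sum, ← sum_neg_distrib]
      exact sum_congr rfl fun e _ => by ring
    rw [h1] at h0
    have : ((-1 : ℤ) ^ m) ≠ 0 := by simp
    apply mul_left_cancel₀ this
    linear_combination h0
  · intro k hk
    have hk : k < m := mem_range.1 hk
    -- exchanging the edges `k` and `k + 1` does not change the face but reverses its sign
    let τ : Equiv.Perm (Fin (m + 1)) := Equiv.swap ⟨k, by omega⟩ ⟨k + 1, by omega⟩
    have hτ : Equiv.Perm.sign τ = -1 := Equiv.Perm.sign_swap (by simp)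
    have : ∑ e : Fin (m + 1) ≃ ι, ordSign e₀ e * ((-1) ^ (k + 1) * C (path z e ∘ face (k + 1))) =
        - ∑ e : Fin (m + 1) ≃ ι, ordSign e₀ e *
          ((-1) ^ (k + 1) * C (path z e ∘ face (k + 1))) := by
      rw [← sum_neg_distrib]
      refine Fintype.sum_equiv (Equiv.equivCongr τ.symm (Equiv.refl ι)) _ _ ?_
      intro e
      have he : (Equiv.equivCongr τ.symm (Equiv.refl ι)) e = τ.trans e := by ext; simp
      have hp : path z (τ.trans e) ∘ face (k + 1) = path z e ∘ face (k + 1) := by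
        funext j κ
        obtain ⟨r, rfl⟩ := (τ.trans e).surjective κ
        simp only [path, Function.comp, Equiv.symm_apply_apply]
        simp only [Equiv.trans_apply, Equiv.symm_apply_apply]
        have : ((r : ℕ) < face (k + 1) j) ↔ ((τ r : ℕ) < face (k + 1) j) := by
          simp only [τ, Equiv.swap_apply_def, Fin.ext_iff, face]
          split_ifs <;> simp <;> omega
        simp only [this]
      rw [he, ordSign_trans, hτ, hp]
      push_cast; ring
    linarith

end

/-! ### Sums invariant under shuffles -/

/-- Two sets of equal size are matched by a permutation that is increasing on the first set and on
its complement. -/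
lemma exists_shuffle {q : ℕ} {B B' : Finset (Fin q)} (h : #B = #B') :
    ∃ σ : Equiv.Perm (Fin q), (∀ j, σ j ∈ B' ↔ j ∈ B) ∧
      ∀ j k, j < k → (j ∈ B ↔ k ∈ B) → σ j < σ k := by
  have hc : #Bᶜ = #B'ᶜ := by rw [card_compl, card_compl, h]
  let f := finSumEquivOfFinset (rfl : #B = #B) (rfl : #Bᶜ = #Bᶜ)
  let g := finSumEquivOfFinset h.symm hc.symm
  have hfl : ∀ x, f (Sum.inl x) ∈ B := fun x => by simp [f]
  have hfr : ∀ x, f (Sum.inr x) ∉ B := fun x => by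
    exact mem_compl.1 (orderEmbOfFin_mem Bᶜ rfl x)
  have hgl : ∀ x, g (Sum.inl x) ∈ B' := fun x => by simp [g]
  have hgr : ∀ x, g (Sum.inr x) ∉ B' := fun x => by
    exact mem_compl.1 (orderEmbOfFin_mem B'ᶜ hc.symm x)
  refine ⟨f.symm.trans g, fun j => ?_, fun j k hjk hB => ?_⟩
  · obtain ⟨x, rfl⟩ := f.surjective j
    rcases x with x | x
    · simp [hfl, hgl]
    · simp [hfr, hgr]
  · obtain ⟨x, rfl⟩ := f.surjective j
    obtain ⟨y, rfl⟩ := f.surjective k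
    rw [Equiv.trans_apply, Equiv.trans_apply, Equiv.symm_apply_apply, Equiv.symm_apply_apply]
    rcases x with x | x <;> rcases y with y | y
    · simpa [f, g] using hjk
    · exact absurd (hB.1 (hfl x)) (hfr y)
    · exact absurd (hB.2 (hfl y)) (hfr x)
    · simpa [f, g] using hjk

/-- If shuffles of the partition `{Bf x, (Bf x)ᶜ}` preserve `H`, the sum of `H` over the `x` with
`Bf x = B` depends only on the size of `B`, so the total sum is an integral combination of the
binomial coefficients `q.choose c` with `0 < c < q`. -/
lemma dvd_sum_of_shuffle {Ω : Type*} {p k q : ℕ} (hp : p.Prime) (hq : q = p ^ k)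
    (S : Finset Ω) (act : Equiv.Perm (Fin q) → Ω ≃ Ω) (hS : ∀ σ x, act σ x ∈ S ↔ x ∈ S)
    (Bf : Ω → Finset (Fin q)) (hB : ∀ σ x j, σ j ∈ Bf (act σ x) ↔ j ∈ Bf x)
    (H : Ω → ℤ) (hne : ∀ x ∈ S, H x ≠ 0 → (Bf x).Nonempty ∧ Bf x ≠ univ)
    (hH : ∀ σ x, (∀ j k, j < k → (j ∈ Bf x ↔ k ∈ Bf x) → σ j < σ k) → H (act σ x) = H x) :
    (p : ℤ) ∣ ∑ x ∈ S, H x := by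
  classical
  let A : Finset (Fin q) → ℤ := fun B => ∑ x ∈ S with Bf x = B, H x
  have hA : ∀ B B' : Finset (Fin q), #B = #B' → A B = A B' := by
    intro B B' h
    obtain ⟨σ, hσ, hmono⟩ := exists_shuffle h
    refine sum_equiv (act σ) (fun x => ?_) fun x hx => ?_
    · simp only [mem_filter, hS]
      refine and_congr_right fun _ => ⟨fun hx => ?_, fun hx => ?_⟩
      · ext j
        obtain ⟨j, rfl⟩ := σ.surjective j
        rw [hB, hσ, hx]
      · ext j
        rw [← hσ, ← hx, hB]
    · rw [mem_filter] at hx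
      rw [hH]
      rw [hx.2]; exact hmono
  let f : ℕ → ℤ := fun c => if h : ∃ B : Finset (Fin q), #B = c then A h.choose else 0
  have hf : ∀ B, A B = f #B := by
    intro B
    have h : ∃ B' : Finset (Fin q), #B' = #B := ⟨B, rfl⟩
    simp only [f, dif_pos h]
    exact hA _ _ h.choose_spec.symm
  have hsum : ∑ x ∈ S, H x = ∑ B : Finset (Fin q), A B := (sum_fiberwise S Bf H).symm
  rw [hsum]
  simp_rw [hf]
  rw [← powerset_univ, sum_powerset_apply_card, card_univ, Fintype.card_fin]
  refine dvd_sum fun c hc => ?_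
  rw [nsmul_eq_mul]
  by_cases h0 : c = 0
  · have : f c = 0 := by
      rw [h0, ← card_empty (α := Fin q), ← hf]
      refine sum_eq_zero fun x hx => ?_
      rw [mem_filter] at hx
      by_contra hx0
      simpa [hx.2] using (hne x hx.1 hx0).1
    rw [this]; simp
  by_cases h1 : c = q
  · have : f c = 0 := by
      rw [h1, ← Fintype.card_fin q, ← card_univ, ← hf]
      refine sum_eq_zero fun x hx => ?_
      rw [mem_filter] at hx
      by_contra hx0
      exact (hne x hx.1 hx0).2 hx.2
    rw [this]; simp
  · subst hq
    exact Dvd.dvd.mul_right (Int.natCast_dvd_natCast.2 (hp.dvd_choose_pow h0 h1)) _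

/-! ### Labellings, cells and the degree -/

/-- The coordinates of the prism: the entries of an `n × q` matrix, and the coordinate `none` along
which two labellings are interpolated. -/
abbrev Idx (n q : ℕ) := Option (Fin n × Fin q)

/-- A labelling of integral matrices: a label for every row. Rows are indexed by `ℕ`, and only the
rows `i < n` matter. -/
abbrev Labelling (n q : ℕ) := (Fin n × Fin q → ℤ) → ℕ → Fin (q + 1)

/-- The action on the coordinates of a permutation of the columns. -/
def coordPerm (n : ℕ) {q : ℕ} (σ : Equiv.Perm (Fin q)) : Equiv.Perm (Idx n q) :=
  Equiv.optionCongr (Equiv.prodCongrRight fun _ : Fin n => σ)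

lemma sign_coordPerm (n : ℕ) {q : ℕ} (σ : Equiv.Perm (Fin q)) :
    Equiv.Perm.sign (coordPerm n σ) = Equiv.Perm.sign σ ^ n := by
  rw [coordPerm, Equiv.optionCongr_sign, Equiv.Perm.sign_prodCongrRight]
  simp

lemma card_idx (n q : ℕ) : Fintype.card (Idx n q) = n * q + 1 := by simp

/-- An arbitrary ordering of the coordinates, fixing the orientation. -/
noncomputable def refOrd (n q : ℕ) : Fin (n * q + 1) ≃ Idx n q :=
  (Fintype.equivFinOfCardEq (card_idx n q)).symm

section

variable {n q : ℕ}

/-- The labelling on the prism equal to `l` at the bottom and to `l'` at the top. -/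
def mix (l l' : Labelling n q) (v : Idx n q → ℤ) : ℕ → Fin (q + 1) :=
  if v none ≤ 0 then l (v ∘ some) else l' (v ∘ some)

/-- The value of the cochain on the matrix part of the simplex `(z, e)`. It is used for orderings
`e` whose last edge is the direction `none`, so that the vertices `0, …, n * q` stay at the bottom. -/
def cell (l : Labelling n q) (z : Idx n q → ℤ) (e : Fin (n * q + 1) ≃ Idx n q) : ℤ :=
  prodCochain q n fun k => l (path z e k ∘ some)

/-- The value of the cochain of `mix l l'` on the face with vertices `0, …, n * q` of the simplex
`(z, e)`. -/
def mixCell (l l' : Labelling n q) (z : Idx n q → ℤ) (e : Fin (n * q + 1) ≃ Idx n q) : ℤ :=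
  prodCochain q n fun k => mix l l' (path z e k)

/-- Base points of the cells in the cube `[-R, R]^(n * q)`. -/
noncomputable def box (n q : ℕ) (R : ℤ) : Finset (Idx n q → ℤ) :=
  Fintype.piFinset fun κ => κ.elim {0} fun _ => Ico (-R) R

/-- Lattice points of the closed cube `[-R, R]^(n * q)`. -/
noncomputable def bigBox (n q : ℕ) (R : ℤ) : Finset (Idx n q → ℤ) :=
  Fintype.piFinset fun κ => κ.elim {0} fun _ => Icc (-R) R

lemma mem_box {R : ℤ} {z : Idx n q → ℤ} :
    z ∈ box n q R ↔ z none = 0 ∧ ∀ x, -R ≤ z (some x) ∧ z (some x) < R := by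
  simp [box, Option.forall]

lemma mem_bigBox {R : ℤ} {z : Idx n q → ℤ} :
    z ∈ bigBox n q R ↔ z none = 0 ∧ ∀ x, -R ≤ z (some x) ∧ z (some x) ≤ R := by
  simp [bigBox, Option.forall]

/-- The signed number of cells of the cube `[-R, R]^(n * q)` on which all labels occur in every
row. -/
noncomputable def degree (R : ℤ) (l : Labelling n q) : ℤ :=
  ∑ e : Fin (n * q + 1) ≃ Idx n q with e (Fin.last _) = none,
    ordSign (refOrd n q) e * ∑ z ∈ box n q R, cell l z e

/-- The multiplicity with which the face of `(z, e)` omitting the last vertex occurs in the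
boundary of the cube. -/
noncomputable def weight (R : ℤ) (z : Idx n q → ℤ) (e : Fin (n * q + 1) ≃ Idx n q) : ℤ :=
  (if z - Pi.single (e (Fin.last _)) 1 ∈ box n q R then 1 else 0) - if z ∈ box n q R then 1 else 0

lemma sum_telescope (R : ℤ) (e : Fin (n * q + 1) ≃ Idx n q) (he : e (Fin.last _) ≠ none)
    (G : (Idx n q → ℤ) → ℤ) :
    ∑ z ∈ box n q R, (G (z + Pi.single (e (Fin.last _)) 1) - G z) =
      ∑ z ∈ bigBox n q R, weight R z e * G z := by
  obtain ⟨x, hx⟩ := Option.ne_none_iff_exists'.1 he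
  simp only [weight, sub_mul, sum_sub_distrib, ite_mul, one_mul, zero_mul, ← sum_filter]
  rw [hx]
  congr 1
  · refine sum_bij (fun z _ => z + Pi.single (some x) 1) ?_ ?_ ?_ ?_
    · intro z hz
      rw [mem_filter, add_sub_cancel_right]
      refine ⟨?_, hz⟩
      rw [mem_box] at hz
      rw [mem_bigBox]
      refine ⟨by simp [hz.1], fun y => ?_⟩
      have := hz.2 y
      simp only [Pi.add_apply, Pi.single_apply]
      split_ifs <;> omega
    · intro z _ z' _ h
      exact add_right_cancel h
    · intro z hz
      rw [mem_filter] at hz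
      exact ⟨_, hz.2, sub_add_cancel _ _⟩
    · intro z _; rfl
  · refine sum_congr ?_ fun _ _ => rfl
    ext z
    rw [mem_filter, mem_bigBox]
    refine ⟨fun h => ⟨?_, h⟩, fun h => h.2⟩
    rw [mem_box] at h
    exact ⟨h.1, fun y => ⟨(h.2 y).1, (h.2 y).2.le⟩⟩

lemma weight_ne_zero {R : ℤ} {z : Idx n q → ℤ} {e : Fin (n * q + 1) ≃ Idx n q}
    {x : Fin n × Fin q} (hx : e (Fin.last _) = some x) (h : weight R z e ≠ 0) :
    z (some x) = R ∨ z (some x) = -R := by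
  by_contra hcon
  push Not at hcon
  apply h
  have : z - Pi.single (some x) 1 ∈ box n q R ↔ z ∈ box n q R := by
    rw [mem_box, mem_box]
    refine and_congr (by simp) (forall_congr' fun y => ?_)
    rcases eq_or_ne y x with rfl | hy
    · simp; omega
    · simp [hy]
  simp [weight, hx, this]

/-- The difference of the degrees of two labellings is carried by the lateral boundary of the
prism. -/
lemma degree_sub (R : ℤ) (l l' : Labelling n q) :
    degree R l - degree R l' =
      ∑ x ∈ (univ.filter fun e : Fin (n * q + 1) ≃ Idx n q => e (Fin.last _) ≠ none) ×ˢ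
        bigBox n q R, ordSign (refOrd n q) x.1 * (weight R x.2 x.1 * mixCell l l' x.2 x.1) := by
  have hC : IsCocycle (n * q) fun y : ℕ → Idx n q → ℤ => prodCochain q n fun k => mix l l' (y k) :=
    ⟨fun y y' h => (isCocycle_prodCochain q n).congr _ _ fun j hj => by rw [h j hj],
      fun y => (isCocycle_prodCochain q n).closed fun k => mix l l' (y k)⟩
  have h := stokes (refOrd n q) hC (box n q R)
  rw [← sum_filter_add_sum_filter_not univ
    (fun e : Fin (n * q + 1) ≃ Idx n q => e (Fin.last _) = none)] at h
  rw [sum_product]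
  have h1 : ∀ e ∈ univ.filter fun e : Fin (n * q + 1) ≃ Idx n q => e (Fin.last _) ≠ none,
      ∑ z ∈ bigBox n q R, ordSign (refOrd n q) e * (weight R z e * mixCell l l' z e) =
      ordSign (refOrd n q) e * ∑ z ∈ box n q R,
        (mixCell l l' (z + Pi.single (e (Fin.last _)) 1) e - mixCell l l' z e) := by
    intro e he
    rw [sum_telescope R e (mem_filter.1 he).2 fun z => mixCell l l' z e, mul_sum]
  rw [sum_congr rfl h1]
  have h2 : ∀ e ∈ univ.filter fun e : Fin (n * q + 1) ≃ Idx n q => e (Fin.last _) = none,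
      ordSign (refOrd n q) e * ∑ z ∈ box n q R,
        (mixCell l l' (z + Pi.single (e (Fin.last _)) 1) e - mixCell l l' z e) =
      ordSign (refOrd n q) e * (∑ z ∈ box n q R, cell l' z e) -
        ordSign (refOrd n q) e * ∑ z ∈ box n q R, cell l z e := by
    intro e he
    have he : e (Fin.last _) = none := (mem_filter.1 he).2
    have he' : e.symm none = Fin.last _ := by rw [← he]; simp
    rw [← mul_sub, ← sum_sub_distrib]
    congr 1
    refine sum_congr rfl fun z hz => ?_
    rw [mem_box] at hz
    congr 1
    · refine (isCocycle_prodCochain q n).congr _ _ fun k hk => ?_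
      have e1 : path (z + Pi.single (e (Fin.last _)) 1) e k none = 1 := by
        simp [path, he, hz.1, he']; omega
      have e2 : path (z + Pi.single (e (Fin.last _)) 1) e k ∘ some = path z e k ∘ some := by
        funext x; simp [path, he]
      simp only [mix, e1, e2]
      simp
    · refine (isCocycle_prodCochain q n).congr _ _ fun k hk => ?_
      have e1 : path z e k none = 0 := by
        simp [path, hz.1, he']; omega
      simp [mix, e1]
  have h' := h
  change (∑ e ∈ univ.filter fun e : Fin (n * q + 1) ≃ Idx n q => e (Fin.last _) = none,
      ordSign (refOrd n q) e * ∑ z ∈ box n q R,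
        (mixCell l l' (z + Pi.single (e (Fin.last _)) 1) e - mixCell l l' z e)) +
    (∑ e ∈ univ.filter fun e : Fin (n * q + 1) ≃ Idx n q => e (Fin.last _) ≠ none,
      ordSign (refOrd n q) e * ∑ z ∈ box n q R,
        (mixCell l l' (z + Pi.single (e (Fin.last _)) 1) e - mixCell l l' z e)) = 0 at h'
  rw [sum_congr rfl h2, sum_sub_distrib] at h'
  unfold degree
  linarith

lemma exists_label {y : ℕ → ℕ → Fin (q + 1)} (h : prodCochain q n y ≠ 0) (i : Fin n)
    (c : Fin (q + 1)) : ∃ k, y k i = c := by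
  have := prod_ne_zero_iff.1 h i (mem_range.2 i.2)
  obtain ⟨k, -, hk⟩ := spernerSign_surj this c
  exact ⟨_, hk⟩

/-- The label `0` marks the rows with negative sum. -/
def ZeroRule (l : Labelling n q) : Prop :=
  ∀ a, ∀ i : Fin n, l a i = 0 ↔ ∑ j, a (i, j) < 0

/-- The label `j.succ` is only given to rows whose `j`-th entry is maximal. -/
def MaxRule (l : Labelling n q) : Prop :=
  ∀ a, ∀ i : Fin n, ∀ j : Fin q, l a i = j.succ → ∀ k, a (i, k) ≤ a (i, j)

/-- The labelling commutes with the permutations of the columns that preserve the order of every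
two columns at sup-distance less than `T`. -/
def ShuffleRule (T : ℕ) (l : Labelling n q) : Prop :=
  ∀ a : Fin n × Fin q → ℤ, ∀ σ : Equiv.Perm (Fin q),
    (∀ j k, j < k → (∀ i, |a (i, j) - a (i, k)| < T) → σ j < σ k) →
    ∀ i : Fin n, l (fun x => a (x.1, σ.symm x.2)) i = extPerm σ (l a i)

lemma le_path {ι : Type*} {m : ℕ} (z : ι → ℤ) (e : Fin (m + 1) ≃ ι) (k : ℕ) (κ : ι) :
    z κ ≤ path z e k κ ∧ path z e k κ ≤ z κ + 1 := by
  unfold path; split_ifs <;> omega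

/-- If both `0` and another label occur in row `i`, then the row sum changes sign on the cell. -/
lemma sum_bounds {l l' : Labelling n q} (hl : ZeroRule l) (hl' : ZeroRule l') (hq : 0 < q)
    {z : Idx n q → ℤ} {e : Fin (n * q + 1) ≃ Idx n q} (h : mixCell l l' z e ≠ 0) (i : Fin n) :
    ∑ j, z (some (i, j)) < 0 ∧ 0 ≤ ∑ j, z (some (i, j)) + q := by
  have hz : ∀ v, mix l l' v i = 0 ↔ ∑ j, v (some (i, j)) < 0 := by
    intro v
    unfold mix
    split_ifs
    · exact hl _ i
    · exact hl' _ i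
  constructor
  · obtain ⟨k, hk⟩ := exists_label h i 0
    rw [hz] at hk
    exact lt_of_le_of_lt (sum_le_sum fun j _ => (le_path z e k _).1) hk
  · obtain ⟨k, hk⟩ := exists_label h i (Fin.succ ⟨0, hq⟩)
    have h0 : ¬ (mix l l' (path z e k) i = 0) := by rw [hk]; exact Fin.succ_ne_zero _
    rw [hz, not_lt] at h0
    refine h0.trans ((sum_le_sum fun j _ => (le_path z e k (some (i, j))).2).trans ?_)
    simp [sum_add_distrib]

/-- A row of small spread cannot contain `R` or `-R` when its sum is close to `0`. -/
lemma spread_contra {R D : ℤ} {a : Fin q → ℤ} (hq : 0 < q) (hD : ∀ j k, a j ≤ a k + D)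
    (hR : D + 1 < R) {j : Fin q} (hj : a j = R ∨ a j = -R) (h1 : ∑ j, a j < 0)
    (h2 : 0 ≤ ∑ j, a j + q) : False := by
  have hq' : (0 : ℤ) < q := by exact_mod_cast hq
  rcases hj with hj | hj
  · have : ∀ k ∈ (univ : Finset (Fin q)), 0 ≤ a k := fun k _ => by have := hD j k; omega
    exact absurd (sum_nonneg this) (not_le.2 h1)
  · have : ∑ k, a k ≤ ∑ k : Fin q, (-2 : ℤ) :=
      sum_le_sum fun k _ => by have := hD k j; omega
    simp at this
    omega

/-- Under the maximum rule the entries of a row on a cell with all labels differ by at most `1`, so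
no boundary cell contributes. -/
lemma degree_eq_of_maxRule {R : ℤ} (hR : 2 < R) (hq : 0 < q) {l l' : Labelling n q}
    (hl : ZeroRule l) (hl' : ZeroRule l') (hm : MaxRule l) (hm' : MaxRule l') :
    degree R l = degree R l' := by
  rw [← sub_eq_zero, degree_sub]
  refine sum_eq_zero fun x hx => ?_
  obtain ⟨e, z⟩ := x
  rw [mem_product, mem_filter] at hx
  obtain ⟨⟨i, j⟩, hij⟩ := Option.ne_none_iff_exists'.1 hx.1.2
  by_contra hne
  have hw := left_ne_zero_of_mul (right_ne_zero_of_mul hne)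
  have hc := right_ne_zero_of_mul (right_ne_zero_of_mul hne)
  dsimp only at hw hc hij
  obtain ⟨h1, h2⟩ := sum_bounds hl hl' hq hc i
  refine spread_contra (a := fun j => z (some (i, j))) (D := 1) hq (fun j k => ?_) (by omega)
    (weight_ne_zero hij hw) h1 h2
  obtain ⟨t, ht⟩ := exists_label hc i k.succ
  have : path z e t (some (i, j)) ≤ path z e t (some (i, k)) := by
    unfold mix at ht
    split_ifs at ht
    · exact hm _ i k ht j
    · exact hm' _ i k ht j
  have h3 := le_path z e t (some (i, j))
  have h4 := le_path z e t (some (i, k))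
  omega

/-- No value of `a` lies in the interval `(v, v + T]`, and there are values on both sides. -/
def IsGap (T : ℕ) (a : Fin q → ℤ) (v : ℤ) : Prop :=
  (∃ j, a j ≤ v) ∧ (∃ j, v < a j) ∧ ∀ j, a j ≤ v ∨ v + T < a j

/-- Without a gap, each of the `q` steps of length `T` up from `a j` meets a new value, giving
`q + 1` values. -/
lemma exists_gap {T : ℕ} {a : Fin q → ℤ} {j k : Fin q} (h : a j + q * T < a k) :
    ∃ v, IsGap T a v := by
  by_contra hno
  push Not at hno
  have key : ∀ s : ℕ, s ≤ q → s + 1 ≤ #{l | a l ≤ a j + s * T} := by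
    intro s
    induction s with
    | zero => intro _; exact card_pos.2 ⟨j, by simp⟩
    | succ s ih =>
      intro hs
      have hT : (s : ℤ) * T ≤ q * T :=
        mul_le_mul_of_nonneg_right (by exact_mod_cast (by omega : s ≤ q)) (by positivity)
      have hT0 : (0 : ℤ) ≤ s * T := by positivity
      have h1 : ¬ ∀ l, a l ≤ a j + s * T ∨ a j + s * T + T < a l := fun h' =>
        hno (a j + s * T) ⟨⟨j, by linarith⟩, ⟨k, by linarith⟩, h'⟩
      push Not at h1
      obtain ⟨l, hl1, hl2⟩ := h1
      refine (Nat.succ_le_succ (ih (by omega))).trans (card_lt_card ?_)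
      rw [ssubset_iff_of_subset]
      · refine ⟨l, ?_, ?_⟩
        · simp; linarith
        · simp; exact hl1
      · intro l' hl'
        simp at hl' ⊢
        nlinarith
  have := key q le_rfl
  have h2 := card_le_univ (univ.filter fun l => a l ≤ a j + q * T)
  simp at h2
  omega

/-- The pairs consisting of a row of `z` and a gap of length `T` in it. -/
def gaps (T : ℕ) (z : Idx n q → ℤ) : Set (Fin n × ℤ) :=
  {x | IsGap T (fun j => z (some (x.1, j))) x.2}

open Classical in
/-- The columns below a chosen gap from `G`. Taking `G` as an argument makes the choice the same
for all `z` with the same set of gaps, in particular for column permutations of `z`. -/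
noncomputable def lowerPart (G : Set (Fin n × ℤ)) (z : Idx n q → ℤ) : Finset (Fin q) :=
  if h : G.Nonempty then univ.filter fun j => z (some (h.some.1, j)) ≤ h.some.2 else ∅

/-- The columns below a chosen gap of `z`, and `∅` if there is no gap. -/
noncomputable def cluster (T : ℕ) (z : Idx n q → ℤ) : Finset (Fin q) :=
  lowerPart (gaps T z) z

lemma gaps_perm (T : ℕ) (z : Idx n q → ℤ) (σ : Equiv.Perm (Fin q)) :
    gaps T (z ∘ (coordPerm n σ).symm) = gaps T z := by
  ext ⟨i, v⟩
  have : ∀ P : ℤ → Prop, (∃ j, P (z (some (i, σ.symm j)))) ↔ ∃ j, P (z (some (i, j))) :=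
    fun P => σ.symm.surjective.exists (p := fun j => P (z (some (i, j)))) |>.symm
  have h2 : ∀ P : ℤ → Prop, (∀ j, P (z (some (i, σ.symm j)))) ↔ ∀ j, P (z (some (i, j))) :=
    fun P => σ.symm.surjective.forall (p := fun j => P (z (some (i, j)))) |>.symm
  have h3 : ∀ j, (coordPerm n σ).symm (some (i, j)) = some (i, σ.symm j) := fun j => by
    rw [Equiv.symm_apply_eq]; simp [coordPerm]
  simp only [gaps, Set.mem_ofPred_eq, IsGap, Function.comp, h3]
  rw [this (fun x => x ≤ v), this (fun x => v < x), h2 (fun x => x ≤ v ∨ v + T < x)]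

lemma cluster_perm (T : ℕ) (z : Idx n q → ℤ) (σ : Equiv.Perm (Fin q)) (j : Fin q) :
    σ j ∈ cluster T (z ∘ (coordPerm n σ).symm) ↔ j ∈ cluster T z := by
  have h3 : ∀ i j, (coordPerm n σ).symm (some (i, σ j)) = some (i, j) := fun i j => by
    rw [Equiv.symm_apply_eq]; simp [coordPerm]
  unfold cluster
  rw [gaps_perm]
  unfold lowerPart
  split_ifs
  · simp [h3]
  · simp

lemma coordPerm_symm_some (σ : Equiv.Perm (Fin q)) (i : Fin n) (j : Fin q) :
    (coordPerm n σ).symm (some (i, j)) = some (i, σ.symm j) := by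
  rw [Equiv.symm_apply_eq]; simp [coordPerm]

lemma box_perm (R : ℤ) (z : Idx n q → ℤ) (σ : Equiv.Perm (Fin q)) :
    z ∘ (coordPerm n σ).symm ∈ box n q R ↔ z ∈ box n q R := by
  have h0 : (coordPerm n σ).symm none = none := by rw [Equiv.symm_apply_eq]; simp [coordPerm]
  rw [mem_box, mem_box]
  simp only [Function.comp, h0, Prod.forall, coordPerm_symm_some]
  refine and_congr_right fun _ => forall_congr' fun i => ?_
  exact σ.symm.surjective.forall (p := fun j => -R ≤ z (some (i, j)) ∧ z (some (i, j)) < R) |>.symm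

lemma bigBox_perm (R : ℤ) (z : Idx n q → ℤ) (σ : Equiv.Perm (Fin q)) :
    z ∘ (coordPerm n σ).symm ∈ bigBox n q R ↔ z ∈ bigBox n q R := by
  have h0 : (coordPerm n σ).symm none = none := by rw [Equiv.symm_apply_eq]; simp [coordPerm]
  rw [mem_bigBox, mem_bigBox]
  simp only [Function.comp, h0, Prod.forall, coordPerm_symm_some]
  refine and_congr_right fun _ => forall_congr' fun i => ?_
  exact σ.symm.surjective.forall (p := fun j => -R ≤ z (some (i, j)) ∧ z (some (i, j)) ≤ R) |>.symm

lemma path_perm {ι : Type*} {m : ℕ} (z : ι → ℤ) (e : Fin (m + 1) ≃ ι) (σ : Equiv.Perm ι) (k : ℕ) :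
    path (z ∘ σ.symm) (e.trans σ) k = path z e k ∘ σ.symm := by
  rfl

lemma weight_perm (R : ℤ) (z : Idx n q → ℤ) (e : Fin (n * q + 1) ≃ Idx n q)
    (σ : Equiv.Perm (Fin q)) :
    weight R (z ∘ (coordPerm n σ).symm) (e.trans (coordPerm n σ)) = weight R z e := by
  unfold weight
  have : z ∘ (coordPerm n σ).symm - Pi.single ((e.trans (coordPerm n σ)) (Fin.last _)) 1 =
      (z - Pi.single (e (Fin.last _)) 1) ∘ (coordPerm n σ).symm := by
    funext κ
    simp [Pi.single_apply, Equiv.symm_apply_eq]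
  rw [this]
  simp only [box_perm]

/-- Modulo `p` the degree is the same for all labellings satisfying `ZeroRule` and `ShuffleRule`. -/
lemma dvd_degree_sub {p k T : ℕ} (hp : p.Prime) (hqp : q = p ^ k) {R : ℤ}
    (hR : q * T + 1 < R) {l l' : Labelling n q}
    (hl : ZeroRule l) (hl' : ZeroRule l') (hs : ShuffleRule T l) (hs' : ShuffleRule T l') :
    (p : ℤ) ∣ degree R l - degree R l' := by
  have hq : 0 < q := by rw [hqp]; exact pow_pos hp.pos k
  rw [degree_sub]
  let act : Equiv.Perm (Fin q) → ((Fin (n * q + 1) ≃ Idx n q) × (Idx n q → ℤ)) ≃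
      ((Fin (n * q + 1) ≃ Idx n q) × (Idx n q → ℤ)) := fun σ =>
    { toFun := fun x => (x.1.trans (coordPerm n σ), x.2 ∘ (coordPerm n σ).symm)
      invFun := fun x => (x.1.trans (coordPerm n σ).symm, x.2 ∘ coordPerm n σ)
      left_inv := fun x => by ext <;> simp
      right_inv := fun x => by ext <;> simp }
  refine dvd_sum_of_shuffle hp hqp _ act ?_ (fun x => cluster T x.2) ?_ _ ?_ ?_
  · rintro σ ⟨e, z⟩
    have : coordPerm n σ (e (Fin.last _)) ≠ none ↔ e (Fin.last _) ≠ none := by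
      rw [not_iff_not, ← Equiv.eq_symm_apply]
      have h0 : (coordPerm n σ).symm none = none := by
        rw [Equiv.symm_apply_eq]; simp [coordPerm]
      rw [h0]
    simp only [act, Equiv.coe_fn_mk, mem_product, mem_filter, mem_univ, true_and,
      Equiv.trans_apply, bigBox_perm, this]
  · rintro σ ⟨e, z⟩ j
    exact cluster_perm T z σ j
  · rintro ⟨e, z⟩ hx hne
    rw [mem_product, mem_filter] at hx
    obtain ⟨⟨i, j⟩, hij⟩ := Option.ne_none_iff_exists'.1 hx.1.2
    have hw := left_ne_zero_of_mul (right_ne_zero_of_mul hne)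
    have hc := right_ne_zero_of_mul (right_ne_zero_of_mul hne)
    dsimp only at hw hc hij ⊢
    obtain ⟨h1, h2⟩ := sum_bounds hl hl' hq hc i
    have hgap : (gaps T z).Nonempty := by
      by_contra hno
      refine spread_contra (a := fun j => z (some (i, j))) (D := q * T) hq (fun j k => ?_) (by omega)
        (weight_ne_zero hij hw) h1 h2
      by_contra hlt
      push Not at hlt
      obtain ⟨v, hv⟩ := exists_gap (a := fun j => z (some (i, j))) hlt
      exact hno ⟨(i, v), hv⟩
    obtain ⟨⟨j1, hj1⟩, ⟨j2, hj2⟩, -⟩ := hgap.some_mem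
    constructor
    · exact ⟨j1, by simpa [cluster, lowerPart, hgap] using hj1⟩
    · intro hu
      have : j2 ∈ cluster T z := by rw [hu]; exact mem_univ _
      simp [cluster, lowerPart, hgap] at this
      exact absurd this (not_le.2 hj2)
  · rintro σ ⟨e, z⟩ hmono
    change ordSign _ (e.trans (coordPerm n σ)) *
      (weight R (z ∘ (coordPerm n σ).symm) (e.trans (coordPerm n σ)) *
        mixCell l l' (z ∘ (coordPerm n σ).symm) (e.trans (coordPerm n σ))) =
      ordSign _ e * (weight R z e * mixCell l l' z e)
    rw [weight_perm, ordSign_perm, sign_coordPerm]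
    have hcell : mixCell l l' (z ∘ (coordPerm n σ).symm) (e.trans (coordPerm n σ)) =
        (Equiv.Perm.sign σ : ℤ) ^ n * mixCell l l' z e := by
      refine prodCochain_perm n σ _ _ fun t i hi => ?_
      rw [path_perm]
      -- columns that are close at a vertex of the cell are on the same side of the gap
      have hnear : ∀ j k, j < k → (∀ i, |path z e t (some (i, j)) - path z e t (some (i, k))| < T) →
          σ j < σ k := by
        intro j k hjk hn
        refine hmono j k hjk ?_
        by_cases hgap : (gaps T z).Nonempty
        swap
        · simp [cluster, lowerPart, hgap]
        have hg := hgap.some_mem.2.2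
        have hn' := hn hgap.some.1
        have hj := hg j
        have hk := hg k
        have bj := le_path z e t (some (hgap.some.1, j))
        have bk := le_path z e t (some (hgap.some.1, k))
        rw [abs_lt] at hn'
        simp only [cluster, lowerPart, hgap, dif_pos, mem_filter, mem_univ, true_and]
        dsimp only at hj hk
        constructor <;> intro hh <;> omega
      have h0 : (coordPerm n σ).symm none = none := by
        rw [Equiv.symm_apply_eq]; simp [coordPerm]
      have hcomp : (path z e t ∘ (coordPerm n σ).symm) ∘ some =
          fun x => (path z e t ∘ some) (x.1, σ.symm x.2) := by
        funext ⟨i', j'⟩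
        simp only [Function.comp_apply, coordPerm_symm_some]
      unfold mix
      rw [hcomp, Function.comp_apply, h0]
      split_ifs
      · exact hs (path z e t ∘ some) σ hnear ⟨i, hi⟩
      · exact hs' (path z e t ∘ some) σ hnear ⟨i, hi⟩
    rw [hcell]
    have hsq : ((Equiv.Perm.sign σ : ℤ) ^ n) * (Equiv.Perm.sign σ : ℤ) ^ n = 1 := by
      rw [← mul_pow, ← Units.val_mul, Int.units_mul_self]; simp
    rw [Units.val_pow_eq_pow_val]
    generalize ordSign (refOrd n q) e = A
    generalize weight R z e = B
    generalize mixCell l l' z e = C at *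
    linear_combination (A * (B * C)) * hsq

end

/-! ### Labels read off from maximal keys, and a labelling of degree one up to sign -/

section
variable {q : ℕ} {α : Type*} [LinearOrder α]

lemma exists_argmax (hq : 0 < q) (f : Fin q → α) : ∃ j, ∀ k, f k ≤ f j := by
  obtain ⟨j, -, hj⟩ := exists_max_image univ f ⟨⟨0, hq⟩, mem_univ _⟩
  exact ⟨j, fun k => hj k (mem_univ k)⟩

/-- The label `0` if the row `a` has negative sum, and otherwise `j.succ` for some `j` maximizing
`f`. -/
noncomputable def rowLabel (hq : 0 < q) (a : Fin q → ℤ) (f : Fin q → α) : Fin (q + 1) :=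
  if ∑ j, a j < 0 then 0 else (exists_argmax hq f).choose.succ

lemma rowLabel_eq_zero (hq : 0 < q) (a : Fin q → ℤ) (f : Fin q → α) :
    rowLabel hq a f = 0 ↔ ∑ j, a j < 0 := by
  unfold rowLabel
  split_ifs with h
  · simp [h]
  · simp [h, Fin.succ_ne_zero]

lemma le_of_rowLabel (hq : 0 < q) {a : Fin q → ℤ} {f : Fin q → α} {j : Fin q}
    (h : rowLabel hq a f = j.succ) (k : Fin q) : f k ≤ f j := by
  unfold rowLabel at h
  split_ifs at h with h0
  · exact absurd h.symm (Fin.succ_ne_zero _)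
  · rw [← Fin.succ_injective _ h]
    exact (exists_argmax hq f).choose_spec k

/-- The labelling whose nonzero labels maximize a key. Rows with index at least `n` get the label
`0`, which is never used. -/
noncomputable def keyLabel {n : ℕ} (hq : 0 < q) (key : (Fin n × Fin q → ℤ) → Fin n → Fin q → α) :
    Labelling n q := fun a i =>
  if h : i < n then rowLabel hq (fun j => a (⟨i, h⟩, j)) (key a ⟨i, h⟩) else 0

lemma keyLabel_apply {n : ℕ} (hq : 0 < q) (key : (Fin n × Fin q → ℤ) → Fin n → Fin q → α)
    (a : Fin n × Fin q → ℤ) (i : Fin n) :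
    keyLabel hq key a i = rowLabel hq (fun j => a (i, j)) (key a i) := by
  simp [keyLabel]

lemma zeroRule_keyLabel {n : ℕ} (hq : 0 < q) (key : (Fin n × Fin q → ℤ) → Fin n → Fin q → α) :
    ZeroRule (keyLabel hq key) := fun a i => by
  rw [keyLabel_apply, rowLabel_eq_zero]

/-- An injective key which orders the columns by their entry and then by their index. -/
def refKey (a : Fin q → ℤ) (j : Fin q) : ℤ := q * a j + j

lemma refKey_inj {a : Fin q → ℤ} {j k : Fin q} (h : refKey a j = refKey a k) : j = k := by
  unfold refKey at h
  have hj := j.2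
  have hk := k.2
  have h1 : (q : ℤ) * (a j - a k) = k - j := by linarith
  have h2 : |(q : ℤ) * (a j - a k)| < q := by rw [h1, abs_lt]; constructor <;> omega
  have h3 : a j - a k = 0 := by
    by_contra hne
    rw [abs_mul, Nat.abs_cast] at h2
    have := Int.one_le_abs hne
    nlinarith
  rw [h3] at h1
  ext; omega

lemma sum_step (π : Equiv.Perm (Fin q)) {k : ℕ} (hk : k ≤ q) :
    ∑ j, (if (π j : ℕ) < k then (1 : ℤ) else 0) = k := by
  rw [Equiv.sum_comp π fun j => if (j : ℕ) < k then (1 : ℤ) else 0,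
    Fin.sum_univ_eq_sum_range (fun j => if j < k then (1 : ℤ) else 0), sum_boole]
  congr 1
  have : (range q).filter (· < k) = range k := by ext; simp; omega
  rw [this, card_range]

lemma spernerSign_inj {y : ℕ → Fin (q + 1)} (h : spernerSign q y ≠ 0) {k k' : ℕ} (hk : k ≤ q)
    (hk' : k' ≤ q) (hy : y k = y k') : k = k' := by
  by_contra hne
  refine h (Matrix.det_zero_of_row_eq (i := ⟨k, by omega⟩) (j := ⟨k', by omega⟩)
    (by simpa [Fin.ext_iff] using hne) ?_)
  funext l
  simp only [Matrix.of_apply]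
  rw [hy]

/-- The row `z` after the entries with `pos j < k` have been raised by `1`. -/
def rowState (z : Fin q → ℤ) (pos : Fin q → ℕ) (k : ℕ) : Fin q → ℤ :=
  fun j => z j + if pos j < k then 1 else 0

/-- There is only one way to raise the entries of a row of length `m + 1` one at a time such that all
labels occur: the initial row is `(0, …, 0, -1)`, the last entry is raised first, and the others
follow in increasing order. Here `P j` is the time at which the entry `j` is raised, and the row is
observed from time `b` on. -/
lemma row_unique {m : ℕ} {z : Fin (m + 1) → ℤ} {P : Fin (m + 1) → ℕ}
    {b : ℕ}
    (h : spernerSign (m + 1) (fun k => rowLabel (Nat.succ_pos m) (rowState z P (b + k))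
      (refKey (rowState z P (b + k)))) ≠ 0) (j : Fin (m + 1)) :
    z j = (if j = Fin.last m then -1 else 0) ∧ P j = b + finRotate (m + 1) j := by
  set y := fun k => rowLabel (Nat.succ_pos m) (rowState z P (b + k))
      (refKey (rowState z P (b + k))) with hy
  -- between two consecutive states an entry is raised, since otherwise their labels agree
  have hJ : ∀ r : Fin (m + 1), ∃ j, P j = b + r := by
    intro r
    by_contra hno
    push Not at hno
    have : rowState z P (b + r) = rowState z P (b + (r + 1)) := by
      funext j
      have := hno j
      unfold rowState
      congr 1
      simp only [show P j < b + (r + 1) ↔ P j < b + r by omega]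
    have h1 : y r = y (r + 1) := by simp only [hy, this]
    have := spernerSign_inj h (by omega) (by omega) h1
    omega
  choose J hJ using hJ
  have hJi : Function.Injective J := fun r r' hr => by
    have h1 := hJ r
    rw [hr, hJ r'] at h1
    ext; omega
  let π : Equiv.Perm (Fin (m + 1)) :=
    (Equiv.ofBijective J (Finite.injective_iff_bijective.1 hJi)).symm
  have hπ : ∀ j, P j = b + π j := fun j => by
    have := hJ (π j)
    rwa [show J (π j) = j from (Equiv.ofBijective J _).apply_symm_apply j] at this
  have hst : ∀ k j, rowState z P (b + k) j = z j + if (π j : ℕ) < k then 1 else 0 := by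
    intro k j
    simp only [rowState, hπ, add_lt_add_iff_left]
  have hsum : ∀ k ≤ m + 1, ∑ j, rowState z P (b + k) j = ∑ j, z j + k := by
    intro k hk
    simp only [hst, sum_add_distrib]
    rw [sum_step π hk]
  have hy0 : ∀ k ≤ m + 1, y k = 0 ↔ ∑ j, z j + k < 0 := fun k hk => by
    rw [hy, rowLabel_eq_zero, hsum k hk]
  have hzsum : ∑ j, z j = -1 := by
    obtain ⟨k, hk, hk0⟩ := spernerSign_surj h 0
    have h1 := (hy0 k hk).1 hk0
    have h2 := (hy0 0 (by omega)).2 (by push_cast; omega)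
    have h3 := (hy0 0 (by omega)).1 h2
    have h4 : ¬ (y 1 = 0) := fun h4 => by
      have := spernerSign_inj h (by omega) (by omega) (h4.trans h2.symm)
      omega
    rw [hy0 1 (by omega)] at h4
    push_cast at h3 h4
    omega
  have hlab : ∀ r, 1 ≤ r → r ≤ m + 1 → ∃ j, y r = Fin.succ j := by
    intro r h1 h2
    refine ⟨_, (Fin.succ_pred (y r) ?_).symm⟩
    rw [Ne, hy0 r h2, hzsum]
    omega
  -- the label of the `r`-th state is the coordinate that has just been raised
  have hstep : ∀ r, 2 ≤ r → r ≤ m + 1 → ∀ j, y r = Fin.succ j → (π j : ℕ) + 1 = r := by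
    intro r h1 h2 j hj
    by_contra hne
    obtain ⟨j', hj'⟩ := hlab (r - 1) (by omega) (by omega)
    have a1 := le_of_rowLabel _ hj j'
    have a2 := le_of_rowLabel _ hj' j
    have a3 : refKey (rowState z P (b + r)) j = refKey (rowState z P (b + (r - 1))) j := by
      simp only [refKey, hst, show ((π j : ℕ) < r ↔ (π j : ℕ) < r - 1) by omega]
    have a4 : refKey (rowState z P (b + (r - 1))) j' ≤ refKey (rowState z P (b + r)) j' := by
      simp only [refKey, hst]
      have : z j' + (if (π j' : ℕ) < r - 1 then 1 else 0) ≤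
          z j' + (if (π j' : ℕ) < r then 1 else 0) := by split_ifs <;> omega
      have hp : (0 : ℤ) ≤ ((m + 1 : ℕ) : ℤ) := by positivity
      linarith [mul_le_mul_of_nonneg_left this hp]
    have : j' = j := refKey_inj (a := rowState z P (b + r)) (by omega)
    rw [this, ← hj] at hj'
    have := spernerSign_inj h (by omega) (by omega) hj'
    omega
  have hmax : ∀ j j', refKey (rowState z P (b + (π j' + 1))) j ≤
      refKey (rowState z P (b + (π j' + 1))) j' := by
    intro j j'
    have : y (π j' + 1) = Fin.succ j' := by
      obtain ⟨r, hr, hrj⟩ := spernerSign_surj h (Fin.succ j')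
      have hr0 : r ≠ 0 := by
        rintro rfl
        have := (hy0 0 (by omega)).2 (by rw [hzsum]; simp)
        rw [hrj] at this
        exact Fin.succ_ne_zero _ this
      rcases Nat.lt_or_ge r 2 with h2 | h2
      · obtain rfl : r = 1 := by omega
        rcases Nat.eq_zero_or_pos (π j' : ℕ) with h0 | h0
        · rw [h0]; exact hrj
        · obtain ⟨j'', hj''⟩ := hlab (π j' + 1) (by omega) (by omega)
          have := hstep (π j' + 1) (by omega) (by omega) j'' hj''
          have : j'' = j' := π.injective (Fin.ext (by omega))
          rw [hj'', this]
      · rw [hstep r h2 hr j' hrj]; exact hrj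
    exact le_of_rowLabel _ this j
  set K : Fin (m + 1) → ℤ := refKey z with hK
  -- the keys of the initial row increase in the order of raising and lie in a short interval
  have hlt : ∀ j j', π j < π j' → K j < K j' := by
    intro j j' hjj
    have h1 := hmax j j'
    rw [Fin.lt_def] at hjj
    simp only [refKey, hst] at h1
    rw [if_pos (by omega), if_pos (by omega)] at h1
    refine lt_of_le_of_ne ?_ fun hh => ?_
    · simp only [hK, refKey]; linarith
    · rw [refKey_inj hh] at hjj; exact lt_irrefl _ hjj
  have hwin : ∀ j j', K j ≤ K j' + (m + 1) := by
    intro j j'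
    rcases lt_or_ge (π j') (π j) with hjj | hjj
    · have h1 := hmax j j'
      rw [Fin.lt_def] at hjj
      simp only [refKey, hst] at h1
      rw [if_neg (by omega), if_pos (by omega)] at h1
      simp only [hK, refKey]
      push_cast at h1 ⊢
      linarith
    · rcases hjj.lt_or_eq with hjj | hjj
      · have := hlt _ _ hjj; omega
      · rw [π.injective hjj]; omega
  have hmono : StrictMono (K ∘ π.symm) := fun r s hrs => hlt _ _ (by simpa using hrs)
  set j0 := π.symm 0 with hj0
  have hmin : ∀ j, K j0 ≤ K j := fun j => by
    have := hmono.monotone (Fin.zero_le (π j))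
    simpa using this
  have hz1 : ∀ j, z j0 ≤ z j ∧ z j ≤ z j0 + 1 := by
    intro j
    have h1 := hmin j
    have h2 := hwin j j0
    simp only [hK, refKey] at h1 h2
    push_cast at h1 h2
    have := j.2
    have := j0.2
    constructor
    · by_contra hc
      have : z j + 1 ≤ z j0 := by omega
      nlinarith
    · by_contra hc
      have : z j0 + 2 ≤ z j := by omega
      nlinarith
  have hz0 : z j0 = -1 := by
    have h1 : ∑ j : Fin (m + 1), z j0 ≤ ∑ j, z j := sum_le_sum fun j _ => (hz1 j).1
    rw [hzsum] at h1
    simp at h1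
    have h2 : ∑ j ∈ univ.erase j0, z j ≤ m * (z j0 + 1) :=
      (sum_le_sum fun j _ => (hz1 j).2).trans_eq
        (by rw [sum_const, card_erase_of_mem (mem_univ _)]; simp)
    rw [← add_sum_erase _ _ (mem_univ j0)] at hzsum
    have h3 : z j0 < 0 := by
      by_contra h3
      push Not at h3
      nlinarith
    by_contra h4
    have h5 : z j0 + 1 ≤ -1 := by omega
    nlinarith
  have hz : ∀ j, j ≠ j0 → z j = 0 := by
    intro j hj
    rw [← add_sum_erase _ _ (mem_univ j0), hz0] at hzsum
    have h2 : ∑ j ∈ univ.erase j0, -z j = 0 := by rw [sum_neg_distrib]; omega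
    rw [sum_eq_zero_iff_of_nonneg fun k _ => by have := (hz1 k).2; omega] at h2
    have := h2 j (by simp [hj])
    omega
  have hlast : j0 = Fin.last m := by
    by_contra hne
    have h1 := hwin (Fin.last m) j0
    have h2 : K (Fin.last m) ≠ K j0 + (m + 1) := fun h => by
      simp only [hK, refKey, hz0, hz _ (Ne.symm hne)] at h
      push_cast at h
      have := j0.2
      exact hne (Fin.ext (by simp; omega))
    simp only [hK, refKey, hz0, hz _ (Ne.symm hne)] at h1 h2
    push_cast at h1 h2
    have := j0.2
    have : (j0 : ℕ) ≠ m := fun h => hne (Fin.ext h)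
    simp at h1 h2
    omega
  have hzj : ∀ j, z j = if j = Fin.last m then -1 else 0 := by
    intro j
    split_ifs with hj
    · rw [hj, ← hlast, hz0]
    · exact hz j (by rwa [hlast])
  refine ⟨hzj j, ?_⟩
  have hrot : ∀ r, K ((finRotate (m + 1)).symm r) = r - 1 := by
    intro r
    obtain ⟨j, rfl⟩ := (finRotate (m + 1)).surjective r
    rw [Equiv.symm_apply_apply]
    simp only [hK, refKey, hzj]
    split_ifs with hj
    · simp [hj]
    · rw [coe_finRotate_of_ne_last hj]; simp
  have hmono' : StrictMono (K ∘ (finRotate (m + 1)).symm) := fun r s hrs => by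
    simp only [Function.comp, hrot]
    rw [Fin.lt_def] at hrs
    omega
  have huniq := (hmono.range_inj hmono').1 (by simp [Set.range_comp])
  have h1 := congrFun huniq (finRotate (m + 1) j)
  simp only [Function.comp, Equiv.symm_apply_apply] at h1
  have h2 := refKey_inj h1
  rw [hπ, (Equiv.symm_apply_eq _).1 h2]

/-- The process described in `row_unique` does show every label exactly once. -/
lemma row_exists {m : ℕ} (b : ℕ) :
    (spernerSign (m + 1) (fun k => rowLabel (Nat.succ_pos m)
      (rowState (fun j => if j = Fin.last m then -1 else 0)
        (fun j => b + finRotate (m + 1) j) (b + k))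
      (refKey (rowState (fun j => if j = Fin.last m then -1 else 0)
        (fun j => b + finRotate (m + 1) j) (b + k))))).natAbs = 1 := by
  set z : Fin (m + 1) → ℤ := fun j => if j = Fin.last m then -1 else 0 with hz
  set P : Fin (m + 1) → ℕ := fun j => b + finRotate (m + 1) j with hP
  set y := fun k => rowLabel (Nat.succ_pos m) (rowState z P (b + k))
      (refKey (rowState z P (b + k))) with hy
  have hst : ∀ k j, rowState z P (b + k) j =
      z j + if (finRotate (m + 1) j : ℕ) < k then 1 else 0 := by
    intro k j
    simp only [rowState, hP, add_lt_add_iff_left]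
  have hy0 : ∀ k ≤ m + 1, y k = 0 ↔ k = 0 := fun k hk => by
    rw [hy, rowLabel_eq_zero]
    simp only [hst, sum_add_distrib]
    rw [sum_step _ hk, hz]
    simp
  have hyj : ∀ k ≤ m + 1, ∀ j, y k = Fin.succ j → (finRotate (m + 1) j : ℕ) + 1 = k := by
    intro k hk j hj
    have hk0 : k ≠ 0 := fun h => Fin.succ_ne_zero j (hj.symm.trans ((hy0 k hk).2 h))
    have hmax := le_of_rowLabel _ hj
    simp only [refKey, hst] at hmax
    simp only [hz] at hmax
    rcases Nat.lt_or_ge k 2 with h2 | h2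
    · obtain rfl : k = 1 := by omega
      have h1 := hmax (Fin.last m)
      rcases eq_or_ne j (Fin.last m) with rfl | hne
      · simp
      · rw [coe_finRotate_of_ne_last hne] at h1
        simp [hne] at h1
        have : (j : ℕ) ≠ m := fun h => hne (Fin.ext h)
        omega
    · have hne2 : (⟨k - 2, by omega⟩ : Fin (m + 1)) ≠ Fin.last m := by
        simp [Fin.ext_iff]; omega
      have h1 := hmax ⟨k - 2, by omega⟩
      rw [coe_finRotate_of_ne_last hne2] at h1
      rw [if_neg hne2, if_pos (by simp; omega)] at h1
      rcases eq_or_ne j (Fin.last m) with rfl | hne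
      · simp at h1
        rw [if_pos (by omega)] at h1
        push_cast [Nat.cast_sub h2] at h1
        simp at h1
        omega
      · rw [coe_finRotate_of_ne_last hne, if_neg hne] at h1
        rw [coe_finRotate_of_ne_last hne]
        have := j.2
        split_ifs at h1 with h3
        · simp at h1; omega
        · simp at h1; omega
  refine spernerSign_natAbs fun k hk k' hk' hkk => ?_
  by_cases h0 : k = 0
  · rw [(hy0 k hk).2 h0] at hkk
    rw [h0, (hy0 k' hk').1 hkk.symm]
  · have hne : y k ≠ 0 := fun h => h0 ((hy0 k hk).1 h)
    rw [← hyj k hk ((y k).pred hne) (by simp), ← hyj k' hk' ((y k).pred hne) (by simp [hkk])]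

end

section
variable {n q : ℕ}

/-- The reference labelling, with nonzero labels at the maximal `refKey`. -/
noncomputable def refLabel (n : ℕ) (hq : 0 < q) : Labelling n q :=
  keyLabel hq fun a i => refKey fun j => a (i, j)

lemma maxRule_refLabel (hq : 0 < q) : MaxRule (refLabel n hq) := by
  intro a i j h k
  rw [refLabel, keyLabel_apply] at h
  have h1 := le_of_rowLabel hq h k
  unfold refKey at h1
  have := j.2
  have := k.2
  by_contra hlt
  have h2 : a (i, j) + 1 ≤ a (i, k) := by omega
  have hq' : (0 : ℤ) < q := by exact_mod_cast hq
  nlinarith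

/-- The ordering of the edges in the only cell that contributes to the degree of `refLabel`: row by
row, in each row the last entry first and then the others in increasing order. -/
noncomputable def refCellOrd (n m : ℕ) : Fin (n * (m + 1) + 1) ≃ Idx n (m + 1) :=
  ((Equiv.optionCongr ((Equiv.prodCongrRight fun _ : Fin n => finRotate (m + 1)).trans
    finProdFinEquiv)).trans finSuccEquivLast.symm).symm

/-- The base point of the only cell that contributes to the degree of `refLabel`. -/
def refCellBase (n m : ℕ) : Idx n (m + 1) → ℤ
  | none => 0
  | some x => if x.2 = Fin.last m then -1 else 0

lemma refCellOrd_symm_some {m : ℕ} (i : Fin n) (j : Fin (m + 1)) :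
    ((refCellOrd n m).symm (some (i, j)) : ℕ) = i * (m + 1) + finRotate (m + 1) j := by
  simp [refCellOrd]
  ring

lemma refCellOrd_last {m : ℕ} : refCellOrd n m (Fin.last _) = none := by
  rw [← Equiv.eq_symm_apply]
  simp [refCellOrd]

lemma cell_refLabel {m : ℕ} (z : Idx n (m + 1) → ℤ) (e : Fin (n * (m + 1) + 1) ≃ Idx n (m + 1)) :
    cell (refLabel n (Nat.succ_pos m)) z e = ∏ i : Fin n, spernerSign (m + 1) fun k =>
      rowLabel (Nat.succ_pos m)
        (rowState (fun j => z (some (i, j))) (fun j => e.symm (some (i, j))) (i * (m + 1) + k))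
        (refKey (rowState (fun j => z (some (i, j))) (fun j => e.symm (some (i, j)))
          (i * (m + 1) + k))) := by
  unfold cell prodCochain
  rw [prod_range]
  refine prod_congr rfl fun i _ => ?_
  congr 1
  funext k
  exact keyLabel_apply _ _ _ i

lemma cell_refLabel_unique {m : ℕ} {z : Idx n (m + 1) → ℤ}
    {e : Fin (n * (m + 1) + 1) ≃ Idx n (m + 1)} (hz : z none = 0) (he : e (Fin.last _) = none)
    (h : cell (refLabel n (Nat.succ_pos m)) z e ≠ 0) :
    z = refCellBase n m ∧ e = refCellOrd n m := by
  rw [cell_refLabel, prod_ne_zero_iff] at h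
  have hrow := fun i j => row_unique (h i (mem_univ i)) j
  constructor
  · funext κ
    rcases κ with _ | ⟨i, j⟩
    · exact hz
    · exact (hrow i j).1
  · rw [← Equiv.symm_bijective.injective.eq_iff]
    ext κ
    rcases κ with _ | ⟨i, j⟩
    · rw [← refCellOrd_last (m := m), Equiv.symm_apply_apply, refCellOrd_last, ← he,
        Equiv.symm_apply_apply]
    · rw [refCellOrd_symm_some]
      exact (hrow i j).2

lemma natAbs_degree_refLabel {m : ℕ} {R : ℤ} (hR : 0 < R) :
    (degree R (refLabel n (Nat.succ_pos m))).natAbs = 1 := by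
  unfold degree
  rw [sum_eq_single (refCellOrd n m), sum_eq_single (refCellBase n m), Int.natAbs_mul]
  · have h1 : (ordSign (refOrd n (m + 1)) (refCellOrd n m)).natAbs = 1 := Int.units_natAbs _
    rw [h1, one_mul, cell_refLabel, ← Int.natAbsHom_apply, map_prod]
    refine prod_eq_one fun i _ => ?_
    have h2 : (fun j => ((refCellOrd n m).symm (some (i, j)) : ℕ)) =
        fun j => i * (m + 1) + finRotate (m + 1) j := funext fun j => refCellOrd_symm_some i j
    rw [h2]
    exact row_exists _
  · intro z hz hne
    by_contra h
    exact hne (cell_refLabel_unique (mem_box.1 hz).1 refCellOrd_last h).1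
  · intro h
    refine absurd (mem_box.2 ⟨rfl, fun x => ?_⟩) h
    simp only [refCellBase]
    split_ifs <;> omega
  · intro e he hne
    rw [sum_eq_zero, mul_zero]
    intro z hz
    by_contra h
    exact hne (cell_refLabel_unique (mem_box.1 hz).1 (mem_filter.1 he).2 h).2
  · intro h
    refine absurd (mem_filter.2 ⟨mem_univ _, ?_⟩) h
    exact refCellOrd_last

/-! ### Labellings from equivariant scores, and a rainbow cell -/

/-- The score of the column `j`, with ties broken first by the column itself and then by the index.
The second step keeps the key compatible with column permutations, and the third one makes it
injective; it only matters for equal columns. -/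
def scoreKey (S : (Fin n × Fin q → ℤ) → Fin n → Fin q → ℝ) (a : Fin n × Fin q → ℤ) (i : Fin n)
    (j : Fin q) : ℝ ×ₗ (Lex (Fin n → ℤ) ×ₗ Fin q) :=
  toLex (S a i j, toLex (toLex fun i => a (i, j), j))

/-- The labelling whose nonzero labels maximize the score `S a i j`, with ties broken as in
`scoreKey`. -/
noncomputable def scoreLabel (hq : 0 < q) (S : (Fin n × Fin q → ℤ) → Fin n → Fin q → ℝ) :
    Labelling n q := keyLabel hq (scoreKey S)

lemma scoreKey_inj {S : (Fin n × Fin q → ℤ) → Fin n → Fin q → ℝ} {a : Fin n × Fin q → ℤ}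
    {i : Fin n} {j k : Fin q} (h : scoreKey S a i j = scoreKey S a i k) : j = k := by
  simp only [scoreKey, EmbeddingLike.apply_eq_iff_eq, Prod.mk.injEq] at h
  exact h.2.2

lemma zeroRule_scoreLabel (hq : 0 < q) (S : (Fin n × Fin q → ℤ) → Fin n → Fin q → ℝ) :
    ZeroRule (scoreLabel hq S) := zeroRule_keyLabel hq _

lemma score_le {hq : 0 < q} {S : (Fin n × Fin q → ℤ) → Fin n → Fin q → ℝ}
    {a : Fin n × Fin q → ℤ} {i : Fin n} {j : Fin q} (h : scoreLabel hq S a i = j.succ)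
    (k : Fin q) : S a i k ≤ S a i j := by
  rw [scoreLabel, keyLabel_apply] at h
  have := le_of_rowLabel hq h k
  rw [scoreKey, scoreKey, Prod.Lex.le_iff] at this
  rcases this with h | h
  · exact h.le
  · exact h.1.le

/-- `σ` preserves the order of every two columns of `a` at sup-distance less than `T`. -/
def Separated (T : ℕ) (a : Fin n × Fin q → ℤ) (σ : Equiv.Perm (Fin q)) : Prop :=
  ∀ j k, j < k → (∀ i, |a (i, j) - a (i, k)| < T) → σ j < σ k

lemma shuffleRule_scoreLabel {T : ℕ} (hT : 0 < T) (hq : 0 < q)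
    {S : (Fin n × Fin q → ℤ) → Fin n → Fin q → ℝ}
    (hS : ∀ a σ, Separated T a σ → ∀ i j, S (fun x => a (x.1, σ.symm x.2)) i (σ j) = S a i j) :
    ShuffleRule T (scoreLabel hq S) := by
  intro a σ hσ i
  set a' : Fin n × Fin q → ℤ := fun x => a (x.1, σ.symm x.2) with ha'
  have hsum : ∑ j, a' (i, j) = ∑ j, a (i, j) := Equiv.sum_comp σ.symm fun j => a (i, j)
  by_cases h0 : ∑ j, a (i, j) < 0
  · rw [(zeroRule_scoreLabel hq S a i).2 h0, extPerm_zero]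
    exact (zeroRule_scoreLabel hq S a' i).2 (by rw [hsum]; exact h0)
  have hne : ∀ b : Fin n × Fin q → ℤ, ¬ ∑ j, b (i, j) < 0 →
      ∃ j, scoreLabel hq S b i = Fin.succ j := fun b hb =>
    ⟨_, (Fin.succ_pred _ fun h => hb ((zeroRule_keyLabel hq _ b i).1 h)).symm⟩
  obtain ⟨j, hj⟩ := hne a h0
  obtain ⟨j', hj'⟩ := hne a' (by rw [hsum]; exact h0)
  obtain ⟨k, rfl⟩ := σ.surjective j'
  rw [hj, hj', extPerm_succ]
  rw [scoreLabel, keyLabel_apply] at hj hj'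
  have h1 := le_of_rowLabel hq hj k
  have h2 := le_of_rowLabel hq hj' (σ j)
  have hmono : ∀ j k, scoreKey S a i j ≤ scoreKey S a i k →
      scoreKey S a' i (σ j) ≤ scoreKey S a' i (σ k) := by
    intro j k h
    simp only [scoreKey, Prod.Lex.le_iff, ofLex_toLex, hS a σ hσ, ha',
      Equiv.symm_apply_apply] at h ⊢
    rcases h with h | ⟨h, h' | ⟨h', h''⟩⟩
    · exact Or.inl h
    · exact Or.inr ⟨h, Or.inl h'⟩
    · refine Or.inr ⟨h, Or.inr ⟨h', ?_⟩⟩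
      rcases h''.lt_or_eq with h'' | rfl
      · refine (hσ j k h'' fun i => ?_).le
        have := congrFun (toLex.injective h') i
        rw [show a (i, j) = a (i, k) from this]; simpa using hT
      · exact le_rfl
  rw [← scoreKey_inj (le_antisymm h2 (hmono _ _ h1))]

/-- For a labelling obeying both rules some unit cube shows all nonzero labels in every row. -/
theorem exists_rainbow {p k T : ℕ} (hp : p.Prime) (hqp : q = p ^ k) (hT : 0 < T)
    {l : Labelling n q} (hl : ZeroRule l) (hs : ShuffleRule T l) :
    ∃ z : Fin n × Fin q → ℤ, (∀ x, |z x| ≤ q * T + 3) ∧ ∀ (i : Fin n) (j : Fin q),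
      ∃ a : Fin n × Fin q → ℤ, (∀ x, z x ≤ a x ∧ a x ≤ z x + 1) ∧ l a i = j.succ := by
  have hq : 0 < q := by rw [hqp]; exact pow_pos hp.pos k
  set R : ℤ := q * T + 3 with hR
  have hqT : (0 : ℤ) ≤ q * T := by positivity
  let S : (Fin n × Fin q → ℤ) → Fin n → Fin q → ℝ := fun a i j => a (i, j)
  have hlex : ShuffleRule T (scoreLabel hq S) :=
    shuffleRule_scoreLabel hT hq fun a σ _ i j => by simp [S]
  have hlexM : MaxRule (scoreLabel hq S) := fun a i j h k => by
    have := score_le h k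
    simpa [S] using this
  have hdvd := dvd_degree_sub hp hqp (R := R) (by omega) hl (zeroRule_scoreLabel hq S) hs hlex
  have href : (degree R (scoreLabel hq S)).natAbs = 1 := by
    obtain ⟨m, rfl⟩ : ∃ m, q = m + 1 := ⟨q - 1, by omega⟩
    rw [degree_eq_of_maxRule (by omega) hq (zeroRule_scoreLabel hq S) (zeroRule_keyLabel _ _) hlexM
      (maxRule_refLabel (n := n) (Nat.succ_pos m))]
    exact natAbs_degree_refLabel (by omega)
  have hne : degree R l ≠ 0 := by
    intro h0
    change (p : ℤ) ∣ degree R l - degree R (scoreLabel hq S) at hdvd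
    rw [h0, zero_sub, dvd_neg, Int.natCast_dvd, href] at hdvd
    exact hp.one_lt.ne' (Nat.dvd_one.1 hdvd)
  obtain ⟨e, -, he⟩ := exists_ne_zero_of_sum_ne_zero hne
  obtain ⟨z, hz, hc⟩ := exists_ne_zero_of_sum_ne_zero (right_ne_zero_of_mul he)
  rw [mem_box] at hz
  refine ⟨z ∘ some, fun x => abs_le.2 ⟨(hz.2 x).1, (hz.2 x).2.le⟩, fun i j => ?_⟩
  obtain ⟨t, ht⟩ := exists_label hc i j.succ
  exact ⟨path z e t ∘ some, fun x => le_path z e t (some x), ht⟩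

end

/-! ### Passage to the limit and the choice of the functions -/

section
open Filter Topology

variable {n q : ℕ}

/-- `σ` preserves the order of every two columns of `x` at sup-distance less than `1`. -/
def RealSeparated (x : Fin n × Fin q → ℝ) (σ : Equiv.Perm (Fin q)) : Prop :=
  ∀ j k, j < k → (∀ i, |x (i, j) - x (i, k)| < 1) → σ j < σ k

/-- Continuous scores with the restricted equivariance can be equalized simultaneously in all
rows. The lattices of mesh `1 / (s + 1)` give points in a fixed cube near which every column has
maximal score in every row, and a limit point of them is the required one. -/
theorem exists_equal_scores {p k : ℕ} (hp : p.Prime) (hqp : q = p ^ k)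
    (F : (Fin n × Fin q → ℝ) → Fin n → Fin q → ℝ) (hF : ∀ i j, Continuous fun x => F x i j)
    (hσ : ∀ x σ, RealSeparated x σ → ∀ i j, F (fun y => x (y.1, σ.symm y.2)) i (σ j) = F x i j) :
    ∃ x, ∀ i j k, F x i j = F x i k := by
  have hq : 0 < q := by rw [hqp]; exact pow_pos hp.pos k
  have step : ∀ s : ℕ, ∃ z : Fin n × Fin q → ℝ, z ∈ Set.Icc (fun _ => (-(q + 3) : ℝ))
      (fun _ => (q + 3 : ℝ)) ∧ ∀ (i : Fin n) (j : Fin q), ∃ a : Fin n × Fin q → ℝ,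
      (∀ x, |a x - z x| ≤ 1 / ((s : ℝ) + 1)) ∧ ∀ k, F a i k ≤ F a i j := by
    intro s
    have hs : (0 : ℝ) < (s : ℝ) + 1 := by positivity
    let S : (Fin n × Fin q → ℤ) → Fin n → Fin q → ℝ :=
      fun a i j => F (fun x => a x / ((s : ℝ) + 1)) i j
    have hshuf : ShuffleRule (s + 1) (scoreLabel hq S) := by
      refine shuffleRule_scoreLabel (Nat.succ_pos s) hq fun a σ h i j => ?_
      refine hσ (fun x => a x / ((s : ℝ) + 1)) σ (fun j k hjk hn => h j k hjk fun i => ?_) i j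
      have := hn i
      rw [← sub_div, abs_div, abs_of_pos hs, div_lt_one hs] at this
      exact_mod_cast this
    obtain ⟨z, hz, hlab⟩ := exists_rainbow hp hqp (Nat.succ_pos s) (zeroRule_scoreLabel hq S) hshuf
    refine ⟨fun x => z x / ((s : ℝ) + 1), ?_, fun i j => ?_⟩
    · have : ∀ x, |(z x : ℝ) / ((s : ℝ) + 1)| ≤ q + 3 := by
        intro x
        rw [abs_div, abs_of_pos hs, div_le_iff₀ hs]
        have h1 : |(z x : ℝ)| ≤ q * (s + 1) + 3 := by exact_mod_cast hz x
        have h2 : (0 : ℝ) ≤ s := by positivity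
        nlinarith
      exact ⟨fun x => (abs_le.1 (this x)).1, fun x => (abs_le.1 (this x)).2⟩
    · obtain ⟨a, ha, hl⟩ := hlab i j
      refine ⟨fun x => a x / ((s : ℝ) + 1), fun x => ?_, fun k => score_le hl k⟩
      rw [← sub_div, abs_div, abs_of_pos hs]
      gcongr
      have h1 : |a x - z x| ≤ 1 := by rw [abs_le]; have := ha x; omega
      exact_mod_cast h1
  choose z hz a ha hmax using step
  obtain ⟨x, -, φ, hφ, hlim⟩ := isCompact_Icc.tendsto_subseq hz
  refine ⟨x, ?_⟩
  have hle : ∀ i j k, F x i k ≤ F x i j := by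
    intro i j k
    have ha' : Tendsto (fun s => a (φ s) i j) atTop (𝓝 x) := by
      rw [tendsto_pi_nhds] at hlim ⊢
      intro y
      have h0 : Tendsto (fun s => a (φ s) i j y - z (φ s) y) atTop (𝓝 0) :=
        squeeze_zero_norm (fun s => ha (φ s) i j y)
          (tendsto_one_div_add_atTop_nhds_zero_nat.comp hφ.tendsto_atTop)
      simpa using h0.add (hlim y)
    exact le_of_tendsto_of_tendsto' (((hF i k).tendsto x).comp ha') (((hF i j).tendsto x).comp ha')
      fun s => hmax (φ s) i j k
  exact fun i j k => le_antisymm (hle i k j) (hle i j k)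

/-- A continuous cutoff, equal to `1` for equal columns and to `0` at sup-distance at least `1`. -/
noncomputable def closeness (x : Fin n × Fin q → ℝ) (j k : Fin q) : ℝ :=
  max 0 (1 - ‖fun i => x (i, j) - x (i, k)‖)

/-- The last coefficient of the `j`-th function, which separates equal columns. -/
noncomputable def tieBreak (x : Fin n × Fin q → ℝ) (j : Fin q) : ℝ :=
  ∑ k, if k < j then closeness x j k else 0

lemma closeness_nonneg (x : Fin n × Fin q → ℝ) (j k : Fin q) : 0 ≤ closeness x j k :=
  le_max_left _ _

lemma closeness_comm (x : Fin n × Fin q → ℝ) (j k : Fin q) : closeness x j k = closeness x k j := by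
  unfold closeness
  rw [← norm_neg]
  congr 3
  funext i
  simp

lemma abs_lt_of_closeness {x : Fin n × Fin q → ℝ} {j k : Fin q} (h : closeness x j k ≠ 0)
    (i : Fin n) : |x (i, j) - x (i, k)| < 1 := by
  have h1 : ‖fun i => x (i, j) - x (i, k)‖ < 1 := by
    by_contra hc
    exact h (max_eq_left (by linarith))
  exact (norm_le_pi_norm (fun i => x (i, j) - x (i, k)) i).trans_lt h1

lemma continuous_tieBreak (j : Fin q) :
    Continuous fun x : Fin n × Fin q → ℝ => tieBreak x j := by
  unfold tieBreak
  refine continuous_finsetSum _ fun k _ => ?_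
  split_ifs
  · unfold closeness; fun_prop
  · exact continuous_const

/-- Pairs of columns at distance at least `1` contribute nothing to `tieBreak`, and the order of all
other pairs is preserved by `σ`. -/
lemma tieBreak_perm {x : Fin n × Fin q → ℝ} {σ : Equiv.Perm (Fin q)} (h : RealSeparated x σ)
    (j : Fin q) : tieBreak (fun y => x (y.1, σ.symm y.2)) (σ j) = tieBreak x j := by
  unfold tieBreak
  rw [← Equiv.sum_comp σ]
  refine sum_congr rfl fun k _ => ?_
  have h1 : closeness (fun y => x (y.1, σ.symm y.2)) (σ j) (σ k) = closeness x j k := by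
    simp [closeness]
  rw [h1]
  by_cases h0 : closeness x j k = 0
  · simp [h0]
  · have : σ k < σ j ↔ k < j := by
      rcases lt_trichotomy k j with hkj | rfl | hkj
      · rw [closeness_comm] at h0
        exact iff_of_true (h k j hkj (abs_lt_of_closeness h0)) hkj
      · simp
      · exact iff_of_false (h j k hkj (abs_lt_of_closeness h0)).not_gt hkj.not_gt
    simp only [this]

lemma tieBreak_lt {x : Fin n × Fin q → ℝ} {j k : Fin q} (hjk : j < k)
    (h : ∀ i, x (i, j) = x (i, k)) : tieBreak x j < tieBreak x k := by
  unfold tieBreak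
  refine sum_lt_sum (fun r _ => ?_) ⟨j, mem_univ j, ?_⟩
  · have : closeness x j r = closeness x k r := by simp [closeness, h]
    rw [this]
    have h0 := closeness_nonneg x k r
    split_ifs with h1 h2
    · exact le_rfl
    · exact absurd (h1.trans hjk) h2
    · exact h0
    · exact le_rfl
  · have : closeness x k j = 1 := by
      have : (fun i => x (i, k) - x (i, j)) = 0 := by funext i; simp [h]
      simp [closeness, this]
    simp [hjk, this]

/-- The coefficients of the `j`-th function in the basis of `L`. -/
noncomputable def coeffs (x : Fin n × Fin q → ℝ) (j : Fin q) : Fin (n + 1) → ℝ :=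
  Fin.snoc (fun i => x (i, j)) (tieBreak x j)

lemma continuous_coeffs (j : Fin q) (r : Fin (n + 1)) :
    Continuous fun x : Fin n × Fin q → ℝ => coeffs x j r := by
  refine Fin.lastCases ?_ (fun i => ?_) r
  · simpa [coeffs] using continuous_tieBreak j
  · simp only [coeffs, Fin.snoc_castSucc]; fun_prop

lemma coeffs_injective (x : Fin n × Fin q → ℝ) : Function.Injective (coeffs x) := by
  intro j k h
  have h1 : ∀ i, x (i, j) = x (i, k) := fun i => by
    simpa [coeffs] using congrFun h i.castSucc
  have h2 : tieBreak x j = tieBreak x k := by simpa [coeffs] using congrFun h (Fin.last n)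
  rcases lt_trichotomy j k with hjk | hjk | hjk
  · exact absurd h2 (tieBreak_lt hjk h1).ne
  · exact hjk
  · exact absurd h2 (tieBreak_lt hjk fun i => (h1 i).symm).ne'

lemma coeffs_perm {x : Fin n × Fin q → ℝ} {σ : Equiv.Perm (Fin q)} (h : RealSeparated x σ)
    (j : Fin q) : coeffs (fun y => x (y.1, σ.symm y.2)) (σ j) = coeffs x j := by
  simp [coeffs, tieBreak_perm h]

variable {X : Type*} [TopologicalSpace X]

/-- The set on which `u j` is maximal. -/
def region (u : Fin q → C(X, ℝ)) (j : Fin q) : Set X := {x | ∀ l, u l x ≤ u j x}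

lemma isClosed_region (u : Fin q → C(X, ℝ)) (j : Fin q) : IsClosed (region u j) := by
  simp only [region, Set.ofPred_forall]
  exact isClosed_iInter fun l => isClosed_le (u l).continuous (u j).continuous

variable [MeasurableSpace X] [BorelSpace X] {ν : Measure X} [IsProbabilityMeasure ν]

lemma sum_region (hq : 0 < q) {u : Fin q → C(X, ℝ)}
    (hu : ∀ j k, j ≠ k → ν {x | u j x = u k x} = 0) : ∑ j, ν (region u j) = 1 := by
  have h1 : ⋃ j, region u j = Set.univ := by
    refine Set.eq_univ_of_forall fun x => ?_
    obtain ⟨j, hj⟩ := exists_argmax hq fun j => u j x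
    exact Set.mem_iUnion.2 ⟨j, hj⟩
  rw [← tsum_fintype (L := .unconditional _), ← measure_iUnion₀, h1, measure_univ]
  · intro j k hjk
    exact measure_mono_null (fun x hx => le_antisymm (hx.2 j) (hx.1 k)) (hu j k hjk)
  · exact fun j => (isClosed_region u j).measurableSet.nullMeasurableSet

lemma continuous_region {Y : Type*} [TopologicalSpace Y] [FirstCountableTopology Y]
    {U : Y → Fin q → C(X, ℝ)} (hU : ∀ j x, Continuous fun y => U y j x)
    (hsep : ∀ y j k, j ≠ k → ν {x | U y j x = U y k x} = 0) (j : Fin q) :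
    Continuous fun y => (ν (region (U y) j)).toReal := by
  rw [continuous_iff_continuousAt]
  intro y₀
  refine (ENNReal.tendsto_toReal (measure_ne_top ν _)).comp ?_
  refine tendsto_measure_of_ae_tendsto_indicator_of_isFiniteMeasure (𝓝 y₀)
    (isClosed_region _ j).measurableSet (fun y => (isClosed_region _ j).measurableSet) ?_
  have hne : ∀ᵐ x ∂ν, ∀ l, l ≠ j → U y₀ l x ≠ U y₀ j x := by
    rw [ae_all_iff]
    intro l
    by_cases hl : l = j
    · simp [hl]
    · have : ∀ᵐ x ∂ν, U y₀ l x ≠ U y₀ j x := by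
        rw [ae_iff]; simpa using hsep y₀ l j hl
      filter_upwards [this] with x hx _ using hx
  filter_upwards [hne] with x hx
  by_cases hmem : x ∈ region (U y₀) j
  · have : ∀ᶠ y in 𝓝 y₀, ∀ l, U y l x ≤ U y j x := by
      rw [eventually_all]
      intro l
      rcases eq_or_ne l j with rfl | hl
      · exact Eventually.of_forall fun _ => le_rfl
      · filter_upwards [(hU l x).continuousAt.eventually_lt (hU j x).continuousAt
          (lt_of_le_of_ne (hmem l) (hx l hl))] with y hy using hy.le
    filter_upwards [this] with y hy using iff_of_true hy hmem
  · obtain ⟨l, hl⟩ : ∃ l, U y₀ j x < U y₀ l x := by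
      by_contra hc
      push Not at hc
      exact hmem hc
    filter_upwards [(hU j x).continuousAt.eventually_lt (hU l x).continuousAt hl] with y hy
    exact iff_of_false (fun h => absurd (h l) (not_le.2 hy)) hmem

end
end VoronoiEquipartition

open VoronoiEquipartition in
/-- Any `n` absolutely continuous probability measures on a compact space `X` can be
simultaneously partitioned into `q` equal parts by a generalized Voronoi partition coming
from a measure-separating subspace `L ⊆ C(X)` of dimension `n + 1`, for `q` a prime power. -/
theorem stmt_0 {X : Type*} [TopologicalSpace X] [CompactSpace X]
    [MeasurableSpace X] [BorelSpace X]
    (μ : Measure X) [IsProbabilityMeasure μ]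
    (n : ℕ) (L : Submodule ℝ C(X, ℝ)) (hL : Module.finrank ℝ L = n + 1)
    (hsep : ∀ f g : C(X, ℝ), f ∈ L → g ∈ L → f ≠ g → μ {x | f x = g x} = 0)
    (μs : Fin n → Measure X) (hprob : ∀ i, IsProbabilityMeasure (μs i))
    (hac : ∀ i, μs i ≪ μ)
    (q : ℕ) (hq : IsPrimePow q) :
    ∃ u : Fin q → C(X, ℝ), (∀ j, u j ∈ L) ∧ Function.Injective u ∧
      ∀ (i : Fin n) (j : Fin q),
        μs i {x | ∀ l : Fin q, u l x ≤ u j x} = 1 / q := by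
  obtain ⟨p, k, hp, -, hpk⟩ := (isPrimePow_nat_iff q).1 hq
  have : FiniteDimensional ℝ L := Module.finite_of_finrank_pos (by omega)
  let v := Module.finBasisOfFinrankEq ℝ L hL
  let U : (Fin n × Fin q → ℝ) → Fin q → C(X, ℝ) := fun x j =>
    (v.equivFun.symm (coeffs x j) : L)
  have hUinj : ∀ x, Function.Injective (U x) := fun x =>
    Subtype.val_injective.comp (v.equivFun.symm.injective.comp (coeffs_injective x))
  have hU : ∀ j pt, Continuous fun x => U x j pt := by
    intro j pt
    have : ∀ x, U x j pt = ∑ r, coeffs x j r * (v r : C(X, ℝ)) pt := by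
      intro x
      simp [U, Module.Basis.equivFun_symm_apply]
    simp only [this]
    exact continuous_finsetSum _ fun r _ => (continuous_coeffs j r).mul continuous_const
  have hU0 : ∀ i x j k, j ≠ k → μs i {pt | U x j pt = U x k pt} = 0 := fun i x j k hjk =>
    hac i (hsep _ _ (Subtype.prop _) (Subtype.prop _) ((hUinj x).ne hjk))
  obtain ⟨x, hx⟩ := exists_equal_scores hp hpk.symm
    (fun x i j => (μs i (region (U x) j)).toReal)
    (fun i j => haveI := hprob i; continuous_region hU (hU0 i) j) (fun x σ h i j => by
      have hperm : ∀ j, U (fun y => x (y.1, σ.symm y.2)) (σ j) = U x j := fun j => by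
        simp only [U, coeffs_perm h]
      have : region (U (fun y => x (y.1, σ.symm y.2))) (σ j) = region (U x) j := by
        ext pt
        simp only [region, Set.mem_ofPred_eq]
        rw [σ.surjective.forall]
        simp only [hperm]
      simp only [this])
  refine ⟨U x, fun j => Subtype.prop _, hUinj x, fun i j => ?_⟩
  have := hprob i
  have hsum := sum_region (ν := μs i) hq.pos (hU0 i x)
  have heq : ∀ k, μs i (region (U x) k) = μs i (region (U x) j) := fun k =>
    (ENNReal.toReal_eq_toReal_iff' (measure_ne_top _ _) (measure_ne_top _ _)).1 (hx i k j)
  simp only [heq, Finset.sum_const, Finset.card_univ, Fintype.card_fin, nsmul_eq_mul] at hsum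
  rw [one_div]
  exact ENNReal.eq_inv_of_mul_eq_one_left (by rw [mul_comm]; exact hsum)
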